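/- Let G be a finite group and p a prime. Suppose G is p-index extremal (G ∈ R(p)) and, moreover, some p-element of G has nontrivial p-index (i.e., G ∈ R(p)*). Then G has a normal p-complement, i.e., there exists a normal subgroup N of G such that the order of N is not divisible by p and the index of N in G is a power of p. -/

import Mathlib

/-- The index of an element `x` of a group `G`: the size of its conjugacy class,
`|x^G| = |G : C_G(x)|`. -/
noncomputable def classSize {G : Type*} [Group G] (x : G) : ℕ :=
  (Subgroup.centralizer {x}).index

/-- The `p`-index of `x`: the `p`-part of `|x^G|`. -/
noncomputable def pIndex (p : ℕ) {G : Type*} [Group G] (x : G) : ℕ :=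
  p ^ ((classSize x).factorization p)

/-- `G` is `p`-index extremal (`G ∈ R(p)`): the set `N(G)_p` of `p`-indices of elements of `G`
contains exactly one nontrivial element. -/
def IsPIndexExtremal (p : ℕ) (G : Type*) [Group G] : Prop :=
  ∃! a : ℕ, a ≠ 1 ∧ ∃ x : G, pIndex p x = a

/-- `x` is a `p`-element: its order is a power of `p`. -/
def IsPElement (p : ℕ) {G : Type*} [Group G] (x : G) : Prop :=
  ∃ k : ℕ, orderOf x = p ^ k

/-!
A finite group has a normal `p`-complement as soon as products of `p`-regular elements are
`p`-regular. Let `q` be the `p`-part of the order of the centralizer of an element of nontrivial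
`p`-index, and let `Z` be the group of central `p`-elements. If `x` is a noncentral `p`-element,
the `p`-elements commuting with `x` form a subgroup `X(x)` of order `q`, which is centralized by
every `p`-regular element commuting with `x`.

Let `P` be a Sylow `p`-subgroup of `G` and consider the Sylow `p`-subgroups, of order `q`, of the
centralizers of `p`-regular elements of nontrivial `p`-index.

* If `P` contains at most one of them, an orbit-counting argument shows that some noncentral
  `p`-element commutes with all `p`-regular elements of `G`.
* If `P` contains two of them, a coprime action argument gives `q = p * |Z|`, so that
  `X(x) = ⟨x⟩Z` for every noncentral `p`-element `x`. Choose `w ∈ P` with image central of order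
  `p` in `P / Z`. Then `w` is weakly closed in `P` modulo `Z`, which puts the focal subgroup of
  `P` inside the abelian group `X(w)`; transfer and Burnside's theorem conclude.
-/

open MulAut Subgroup
open scoped Pointwise commutatorElement

/-- `x` is `p`-regular: its order is prime to `p`, the usual meaning of a `p'`-element. -/
def IsPRegular (p : ℕ) {G : Type*} [Group G] (x : G) : Prop :=
  p.Coprime (orderOf x)

section Conjugation

variable {G : Type*} [Group G] {g x : G} {A : Subgroup G}

theorem mem_centralizer_singleton_iff_commute : g ∈ centralizer {x} ↔ Commute g x :=
  mem_centralizer_singleton_iff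

theorem mem_centralizer_iff_commute :
    g ∈ centralizer (A : Set G) ↔ ∀ a ∈ A, Commute g a :=
  mem_centralizer_iff.trans (forall₂_congr fun _ _ => eq_comm)

theorem le_centralizer_singleton_iff : A ≤ centralizer {x} ↔ x ∈ centralizer (A : Set G) := by
  rw [mem_centralizer_iff_commute]
  exact forall₂_congr fun _ _ => mem_centralizer_singleton_iff_commute.trans Commute.symm_iff

theorem mem_conj_smul_iff : x ∈ conj g • A ↔ g⁻¹ * x * g ∈ A := by
  rw [mem_pointwise_smul_iff_inv_smul_mem, ← map_inv, MulAut.smul_def, conj_apply, inv_inv]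

theorem conj_mem_conj_smul_iff : g * x * g⁻¹ ∈ conj g • A ↔ x ∈ A :=
  smul_mem_pointwise_smul_iff (a := conj g)

theorem conj_smul_mul (g h : G) (A : Subgroup G) : conj (g * h) • A = conj g • conj h • A := by
  rw [map_mul, mul_smul]

theorem card_conj_smul (g : G) (A : Subgroup G) :
    Nat.card (conj g • A : Subgroup G) = Nat.card A :=
  Nat.card_congr (equivSMul (conj g) A).symm.toEquiv

theorem mem_normalizer_iff_conj_smul_eq : g ∈ normalizer (A : Set G) ↔ conj g • A = A :=
  mem_normalizer_iff_map_conj_eq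

theorem conj_mem_of_mem_normalizer (hg : g ∈ normalizer (A : Set G)) (hx : x ∈ A) :
    g * x * g⁻¹ ∈ A :=
  (mem_normalizer_iff.1 hg x).1 hx

theorem inv_conj_mem_of_mem_normalizer (hg : g ∈ normalizer (A : Set G)) (hx : x ∈ A) :
    g⁻¹ * x * g ∈ A :=
  (mem_normalizer_iff''.1 hg x).1 hx

theorem mem_normalizer_conj_smul_iff :
    x ∈ normalizer ((conj g • A : Subgroup G) : Set G) ↔
      g⁻¹ * x * g ∈ normalizer (A : Set G) := by
  rw [mem_normalizer_iff_conj_smul_eq, mem_normalizer_iff_conj_smul_eq, conj_smul_mul,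
    conj_smul_mul, map_inv, inv_smul_eq_iff]

theorem mem_normalizer_of_forall_conj_mem [Finite G] (h : ∀ x ∈ A, g * x * g⁻¹ ∈ A) :
    g ∈ normalizer (A : Set G) := by
  rw [mem_normalizer_iff_conj_smul_eq]
  refine eq_of_le_of_card_ge (fun x hx => ?_) (card_conj_smul g A).ge
  simpa [mul_assoc] using h _ (mem_conj_smul_iff.1 hx)

theorem conj_smul_centralizer_singleton (g x : G) :
    conj g • centralizer {x} = centralizer {g * x * g⁻¹} := by
  ext y
  rw [mem_conj_smul_iff, mem_centralizer_singleton_iff_commute,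
    mem_centralizer_singleton_iff_commute, ← commute_map_iff (conj g).injective]
  simp [mul_assoc]

end Conjugation

section Elements

variable {G : Type*} [Group G] {p : ℕ} {x y g : G} {T : Subgroup G}

theorem orderOf_conj_eq (g x : G) : orderOf (g * x * g⁻¹) = orderOf x :=
  MulEquiv.orderOf_eq (conj g) x

theorem IsPElement.conj (hx : IsPElement p x) (g : G) : IsPElement p (g * x * g⁻¹) := by
  rwa [IsPElement, orderOf_conj_eq]

theorem IsPRegular.conj (hx : IsPRegular p x) (g : G) : IsPRegular p (g * x * g⁻¹) := by
  rwa [IsPRegular, orderOf_conj_eq]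

theorem IsPRegular.one : IsPRegular p (1 : G) := by simp [IsPRegular]

theorem IsPRegular.inv (hx : IsPRegular p x) : IsPRegular p x⁻¹ := by
  rwa [IsPRegular, orderOf_inv]

theorem IsPRegular.mul (hx : IsPRegular p x) (hy : IsPRegular p y) (h : Commute x y) :
    IsPRegular p (x * y) :=
  (Nat.Coprime.mul_right hx hy).coprime_dvd_right h.orderOf_mul_dvd_mul_orderOf

theorem IsPElement.one : IsPElement p (1 : G) := ⟨0, by simp⟩

theorem IsPElement.inv (hx : IsPElement p x) : IsPElement p x⁻¹ := by
  rwa [IsPElement, orderOf_inv]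

theorem IsPElement.isPGroup_zpowers (hx : IsPElement p x) : IsPGroup p (zpowers x) := by
  obtain ⟨k, hk⟩ := hx
  exact IsPGroup.of_card (n := k) (by rw [Nat.card_zpowers, hk])

theorem IsPElement.coprime_orderOf (hx : IsPElement p x) (hy : IsPRegular p y) :
    (orderOf x).Coprime (orderOf y) := by
  obtain ⟨k, hk⟩ := hx
  rw [hk]
  exact Nat.Coprime.pow_left k hy

theorem IsPElement.eq_one_of_isPRegular (hx : IsPElement p x) (hx' : IsPRegular p x) : x = 1 :=
  orderOf_eq_one_iff.1 ((Nat.coprime_self _).1 (hx.coprime_orderOf hx'))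

theorem IsPElement.mem_zpowers_mul (hx : IsPElement p x) (hy : IsPRegular p y)
    (h : Commute x y) : x ∈ zpowers (x * y) := by
  obtain ⟨n, hnx, hny⟩ := Nat.chineseRemainder (hx.coprime_orderOf hy) 1 0
  have hxn : x ^ n = x := by simpa using pow_eq_pow_iff_modEq.2 hnx
  have hyn : y ^ n = 1 := by simpa using pow_eq_pow_iff_modEq.2 hny
  have hn : (x * y) ^ n = x := by rw [h.mul_pow, hxn, hyn, mul_one]
  exact mem_zpowers_iff.2 ⟨n, by rw [zpow_natCast, hn]⟩

theorem commute_of_mem_zpowers (hx : x ∈ zpowers y) (h : Commute g y) : Commute g x := by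
  obtain ⟨n, rfl⟩ := hx
  exact h.zpow_right n

theorem IsPElement.commute_left_of_commute_mul (hx : IsPElement p x) (hy : IsPRegular p y)
    (h : Commute x y) (hg : Commute g (x * y)) : Commute g x :=
  commute_of_mem_zpowers (hx.mem_zpowers_mul hy h) hg

theorem IsPElement.commute_right_of_commute_mul (hx : IsPElement p x) (hy : IsPRegular p y)
    (h : Commute x y) (hg : Commute g (x * y)) : Commute g y := by
  simpa using (hx.commute_left_of_commute_mul hy h hg).inv_right.mul_right hg

theorem IsPElement.centralizer_mul_le_left (hx : IsPElement p x) (hy : IsPRegular p y)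
    (h : Commute x y) : centralizer {x * y} ≤ centralizer {x} := fun g hg => by
  rw [mem_centralizer_singleton_iff_commute] at *
  exact hx.commute_left_of_commute_mul hy h hg

theorem IsPElement.centralizer_mul_le_right (hx : IsPElement p x) (hy : IsPRegular p y)
    (h : Commute x y) : centralizer {x * y} ≤ centralizer {y} := fun g hg => by
  rw [mem_centralizer_singleton_iff_commute] at *
  exact hx.commute_right_of_commute_mul hy h hg

variable [hp : Fact p.Prime]

theorem isPElement_iff_exists_pow_eq_one : IsPElement p x ↔ ∃ k : ℕ, x ^ p ^ k = 1 :=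
  exists_orderOf_eq_prime_pow_iff

theorem IsPElement.mul (hx : IsPElement p x) (hy : IsPElement p y) (h : Commute x y) :
    IsPElement p (x * y) := by
  rw [isPElement_iff_exists_pow_eq_one] at *
  obtain ⟨k, hk⟩ := hx
  obtain ⟨l, hl⟩ := hy
  exact ⟨k + l, by rw [h.mul_pow, pow_add, pow_mul, hk, mul_comm, pow_mul, hl, one_pow, one_pow,
    one_mul]⟩

theorem isPElement_of_mem (hT : IsPGroup p T) (hx : x ∈ T) : IsPElement p x := by
  obtain ⟨k, hk⟩ := IsPGroup.iff_orderOf.1 hT ⟨x, hx⟩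
  exact ⟨k, by rwa [orderOf_mk] at hk⟩

theorem isPGroup_of_forall_isPElement (h : ∀ x ∈ T, IsPElement p x) : IsPGroup p T := by
  refine IsPGroup.iff_orderOf.2 fun x => ?_
  obtain ⟨k, hk⟩ := h x x.2
  exact ⟨k, by rwa [orderOf_coe] at hk⟩

theorem exists_isPElement_mul_isPRegular_eq [Finite G] (p : ℕ) [hp : Fact p.Prime] (g : G) :
    ∃ x y : G, IsPElement p x ∧ IsPRegular p y ∧ Commute x y ∧ x * y = g := by
  obtain ⟨k, m, hm, hkm⟩ :=
    Nat.exists_eq_pow_mul_and_not_dvd (orderOf_pos g).ne' p hp.out.ne_one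
  have hpm : p.Coprime m := (hp.out.coprime_iff_not_dvd).2 hm
  obtain ⟨n, hn1, hn0⟩ := Nat.chineseRemainder (hpm.pow_left k) 1 0
  obtain ⟨c, rfl⟩ : m ∣ n := (Nat.modEq_zero_iff_dvd).1 hn0
  refine ⟨g ^ (m * c), g ^ (1 - (m * c : ℕ) : ℤ), ?_, ?_, ?_, ?_⟩
  · refine isPElement_iff_exists_pow_eq_one.2 ⟨k, ?_⟩
    rw [← pow_mul, show m * c * p ^ k = orderOf g * c by rw [hkm]; ring, pow_mul,
      pow_orderOf_eq_one, one_pow]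
  · obtain ⟨d, hd⟩ := (Nat.modEq_iff_dvd.1 hn1)
    refine hpm.coprime_dvd_right (orderOf_dvd_of_pow_eq_one ?_)
    rw [← zpow_natCast, ← zpow_mul, show ((1 : ℤ) - (m * c : ℕ)) * m = (orderOf g : ℕ) * d by
      rw [← Nat.cast_one, hd, hkm]; push_cast; ring, zpow_mul, zpow_natCast, pow_orderOf_eq_one,
      one_zpow]
  · exact (Commute.refl g).pow_left _ |>.zpow_right _
  · rw [← zpow_natCast, ← zpow_add, add_sub_cancel, zpow_one]

end Elements

/-- `T` is a Sylow `p`-subgroup of the subgroup `H`, all being seen inside the ambient group. It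
replaces `Sylow p H`, whose members are subgroups of the subtype `H`. -/
structure IsSylowIn (p : ℕ) {G : Type*} [Group G] (T H : Subgroup G) : Prop where
  le : T ≤ H
  isPGroup : IsPGroup p T
  card_eq : Nat.card T = ordProj[p] (Nat.card H)

section Sylow

variable {G : Type*} [Group G] {p : ℕ} {H K Q S T : Subgroup G}

theorem IsSylowIn.conj_smul (hT : IsSylowIn p T H) (g : G) :
    IsSylowIn p (conj g • T) (conj g • H) where
  le := pointwise_smul_le_pointwise_smul_iff.2 hT.le
  isPGroup := hT.isPGroup.map _
  card_eq := by rw [card_conj_smul, card_conj_smul, hT.card_eq]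

theorem IsSylowIn.conj_smul_of_mem (hT : IsSylowIn p T H) {g : G} (hg : g ∈ H) :
    IsSylowIn p (conj g • T) H := by
  simpa only [conj_smul_eq_self_of_mem hg] using hT.conj_smul g

theorem mul_ordProj_le_of_lt [hp : Fact p.Prime] {m n : ℕ} (h : ordProj[p] m < ordProj[p] n) :
    p * ordProj[p] m ≤ ordProj[p] n := by
  rw [← pow_succ']
  exact Nat.pow_le_pow_right hp.out.pos ((Nat.pow_lt_pow_iff_right hp.out.one_lt).1 h)

variable [Finite G] [hp : Fact p.Prime]

theorem ordProj_card_mono (h : H ≤ K) : ordProj[p] (Nat.card H) ≤ ordProj[p] (Nat.card K) :=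
  Nat.pow_le_pow_right hp.out.pos
    ((Nat.factorization_le_iff_dvd Nat.card_pos.ne' Nat.card_pos.ne').2 (card_dvd_of_le h) p)

theorem ordProj_card_eq_of_isPGroup (hQ : IsPGroup p Q) :
    ordProj[p] (Nat.card Q) = Nat.card Q := by
  obtain ⟨n, hn⟩ := IsPGroup.iff_card.1 hQ
  rw [hn, Nat.ordProj_self_pow hp.out]

theorem card_le_ordProj_card (hQ : IsPGroup p Q) (h : Q ≤ H) :
    Nat.card Q ≤ ordProj[p] (Nat.card H) :=
  ordProj_card_eq_of_isPGroup hQ ▸ ordProj_card_mono h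

theorem isSylowIn_of_le_card (hQ : IsPGroup p Q) (h : Q ≤ H)
    (hc : ordProj[p] (Nat.card H) ≤ Nat.card Q) : IsSylowIn p Q H :=
  ⟨h, hQ, (card_le_ordProj_card hQ h).antisymm hc⟩

theorem IsSylowIn.eq_of_le (hT : IsSylowIn p T H) (hQ : IsPGroup p Q) (hQH : Q ≤ H)
    (hTQ : T ≤ Q) : T = Q :=
  eq_of_le_of_card_ge hTQ (hT.card_eq ▸ card_le_ordProj_card hQ hQH)

theorem IsSylowIn.of_card_le (hT : IsSylowIn p T H) (h : H ≤ K)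
    (hc : ordProj[p] (Nat.card K) ≤ ordProj[p] (Nat.card H)) : IsSylowIn p T K :=
  isSylowIn_of_le_card hT.isPGroup (hT.le.trans h) (hT.card_eq ▸ hc)

theorem IsSylowIn.of_le (hT : IsSylowIn p T K) (hTH : T ≤ H) (hHK : H ≤ K) : IsSylowIn p T H :=
  isSylowIn_of_le_card hT.isPGroup hTH (hT.card_eq ▸ ordProj_card_mono hHK)

theorem exists_isSylowIn_ge (hQ : IsPGroup p Q) (hQH : Q ≤ H) :
    ∃ T, IsSylowIn p T H ∧ Q ≤ T := by
  obtain ⟨S, hS⟩ := (hQ.comap_subtype (K := H)).exists_le_sylow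
  refine ⟨(S : Subgroup H).map H.subtype, ⟨map_subtype_le _, S.2.map _, ?_⟩,
    fun x hx => ⟨⟨x, hQH hx⟩, hS hx, rfl⟩⟩
  rw [card_map_of_injective H.subtype_injective, S.card_eq_multiplicity]

theorem exists_isSylowIn (p : ℕ) [Fact p.Prime] (H : Subgroup G) : ∃ T, IsSylowIn p T H :=
  (exists_isSylowIn_ge IsPGroup.of_bot bot_le).imp fun _ h => h.1

theorem IsPElement.exists_isSylowIn_mem {x : G} (hx : IsPElement p x) (hxH : x ∈ H) :
    ∃ T, IsSylowIn p T H ∧ x ∈ T :=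
  (exists_isSylowIn_ge hx.isPGroup_zpowers (zpowers_le.2 hxH)).imp fun _ h =>
    ⟨h.1, h.2 (mem_zpowers x)⟩

theorem IsSylowIn.exists_sylow_coe_eq (hT : IsSylowIn p T H) :
    ∃ S : Sylow p H, (S : Subgroup H) = T.subgroupOf H :=
  ⟨Sylow.ofCard (T.subgroupOf H)
    (by rw [Nat.card_congr (subgroupOfEquivOfLe hT.le).toEquiv, hT.card_eq]), rfl⟩

theorem IsSylowIn.exists_conj_eq (hT : IsSylowIn p T H) (hS : IsSylowIn p S H) :
    ∃ k ∈ H, S = conj k • T := by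
  obtain ⟨T', hT'⟩ := hT.exists_sylow_coe_eq
  obtain ⟨S', hS'⟩ := hS.exists_sylow_coe_eq
  obtain ⟨k, hk⟩ := MulAction.exists_smul_eq H T' S'
  refine ⟨k, k.2, ?_⟩
  rw [← map_subgroupOf_eq_of_le hS.le, ← hS', ← hk, Sylow.coe_subgroup_smul, hT',
    conj_smul_subgroupOf hT.le, map_subgroupOf_eq_of_le (conj_smul_le_of_le hT.le k)]

theorem IsSylowIn.exists_le_conj (hT : IsSylowIn p T H) (hQ : IsPGroup p Q) (hQH : Q ≤ H) :
    ∃ k ∈ H, Q ≤ conj k • T := by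
  obtain ⟨S, hS, hQS⟩ := exists_isSylowIn_ge hQ hQH
  obtain ⟨k, hk, rfl⟩ := hT.exists_conj_eq hS
  exact ⟨k, hk, hQS⟩

theorem IsSylowIn.exists_mem_conj (hT : IsSylowIn p T H) {x : G} (hx : IsPElement p x)
    (hxH : x ∈ H) : ∃ k ∈ H, x ∈ conj k • T := by
  obtain ⟨k, hk, hle⟩ := hT.exists_le_conj hx.isPGroup_zpowers (zpowers_le.2 hxH)
  exact ⟨k, hk, hle (mem_zpowers x)⟩

theorem IsSylowIn.le_of_le_normalizer (hT : IsSylowIn p T H) (hQ : IsPGroup p Q) (hQH : Q ≤ H)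
    (hQT : Q ≤ normalizer (T : Set G)) : Q ≤ T :=
  le_sup_right.trans_eq (hT.eq_of_le (hT.isPGroup.to_sup_of_normal_left' hQ hQT)
    (sup_le hT.le hQH) le_sup_left).symm

end Sylow

section Orbits

open MulAction

theorem sum_ncard_fixedBy (M Ω : Type*) [Group M] [Fintype M] [Finite Ω] [MulAction M Ω] :
    ∑ g : M, (fixedBy Ω g).ncard = Nat.card (orbitRel.Quotient M Ω) * Nat.card M := by
  classical
  have := Fintype.ofFinite Ω
  simp only [← Nat.card_coe_set_eq, Nat.card_eq_fintype_card]
  exact sum_card_fixedBy_eq_card_orbits_mul_card_group M Ω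

variable {M Ω : Type*} [Group M] [Finite Ω] [MulAction M Ω]

theorem card_orbits_le_ncard {S : Set Ω} (hS : ∀ a : Ω, ∃ g : M, g • a ∈ S) :
    Nat.card (orbitRel.Quotient M Ω) ≤ S.ncard := by
  refine Nat.card_le_card_of_surjective (fun s : S => (⟦s.1⟧ : orbitRel.Quotient M Ω)) fun o => ?_
  induction o using Quotient.inductionOn with
  | h a =>
    obtain ⟨g, hg⟩ := hS a
    exact ⟨⟨g • a, hg⟩, Quotient.sound (mem_orbit a g)⟩

theorem smul_eq_of_card_orbits_le_ncard_fixedBy [Finite M]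
    (h : ∀ g : M, Nat.card (orbitRel.Quotient M Ω) ≤ (fixedBy Ω g).ncard) (g : M) (a : Ω) :
    g • a = a := by
  have := Fintype.ofFinite M
  have hsum : ∑ g : M, (fixedBy Ω g).ncard = ∑ _g : M, Nat.card (orbitRel.Quotient M Ω) := by
    rw [sum_ncard_fixedBy, Finset.sum_const, Finset.card_univ, smul_eq_mul,
      ← Nat.card_eq_fintype_card, mul_comm]
  have hcard (g : M) : Nat.card (orbitRel.Quotient M Ω) = (fixedBy Ω g).ncard :=
    (Finset.sum_eq_sum_iff_of_le fun i _ => h i).1 hsum.symm g (Finset.mem_univ g)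
  have huniv : fixedBy Ω g = Set.univ := by
    refine Set.eq_of_subset_of_ncard_le (Set.subset_univ _) ?_
    rw [← fixedBy_one_eq_univ Ω M, ← hcard, ← hcard]
  exact mem_fixedBy.1 (huniv ▸ Set.mem_univ a)

theorem eq_top_of_forall_exists_conj_mem {G : Type*} [Group G] [Finite G] {M : Subgroup G}
    (h : ∀ g : G, ∃ k : G, k⁻¹ * g * k ∈ M) : M = ⊤ := by
  refine eq_top_iff.2 fun g _ => ?_
  have hone : Nat.card (orbitRel.Quotient G (G ⧸ M)) = 1 :=
    Nat.card_eq_one_iff_unique.2 ⟨(pretransitive_iff_subsingleton_quotient G _).1 inferInstance,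
      ⟨⟦((1 : G) : G ⧸ M)⟧⟩⟩
  have hfix (g : G) : 1 ≤ (fixedBy (G ⧸ M) g).ncard := by
    obtain ⟨k, hk⟩ := h g
    refine (Set.ncard_pos).2 ⟨(k : G ⧸ M), ?_⟩
    rw [mem_fixedBy, Quotient.smul_coe, eq_comm, QuotientGroup.eq, smul_eq_mul, ← mul_assoc]
    exact hk
  have key := smul_eq_of_card_orbits_le_ncard_fixedBy (by rwa [hone]) g ((1 : G) : G ⧸ M)
  rw [Quotient.smul_coe, eq_comm, QuotientGroup.eq] at key
  simpa using key

end Orbits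

section Covering

variable {G : Type*} [Group G] [Finite G] {p : ℕ} {A H T : Subgroup G}

theorem commute_of_ncard_le_ncard_commute {B S : Set G}
    (hB : ∀ b ∈ B, ∀ g : G, g * b * g⁻¹ ∈ B) (hS : ∀ b ∈ B, ∃ g : G, g * b * g⁻¹ ∈ S)
    (hcard : ∀ g : G, S.ncard ≤ {b ∈ B | Commute g b}.ncard) {b : G} (hb : b ∈ B) (g : G) :
    Commute g b := by
  let B' : SubMulAction (ConjAct G) G := ⟨B, fun g b hb => hB b hb (ConjAct.ofConjAct g)⟩
  have horbits : Nat.card (MulAction.orbitRel.Quotient (ConjAct G) B') ≤ S.ncard := by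
    refine (card_orbits_le_ncard (S := Subtype.val ⁻¹' S) fun b => ?_).trans
      ((Set.ncard_subtype _ S).trans_le (Set.ncard_le_ncard Set.inter_subset_left))
    obtain ⟨g, hg⟩ := hS b b.2
    exact ⟨ConjAct.toConjAct g, hg⟩
  have hfix (g : ConjAct G) :
      {b ∈ B | Commute (ConjAct.ofConjAct g) b}.ncard ≤ (MulAction.fixedBy B' g).ncard := by
    rw [← Set.ncard_image_of_injective (MulAction.fixedBy B' g) Subtype.val_injective]
    exact Set.ncard_le_ncard fun b hb =>
      ⟨⟨b, hb.1⟩, Subtype.ext (mul_inv_eq_iff_eq_mul.2 hb.2.eq), rfl⟩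
  have hfin : Finite (ConjAct G) := ‹Finite G›
  have hsmul := smul_eq_of_card_orbits_le_ncard_fixedBy
    (fun g => horbits.trans ((hcard _).trans (hfix g))) (ConjAct.toConjAct g) ⟨b, hb⟩
  exact mul_inv_eq_iff_eq_mul.1 (congrArg Subtype.val hsmul)

theorem le_of_forall_exists_conj_mem {M : Subgroup G}
    (h : ∀ g ∈ H, ∃ k ∈ H, k⁻¹ * g * k ∈ M) : H ≤ M :=
  subgroupOf_eq_top.1 (eq_top_of_forall_exists_conj_mem fun g =>
    let ⟨k, hkH, hk⟩ := h g g.2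
    ⟨⟨k, hkH⟩, hk⟩)

variable [hp : Fact p.Prime]

theorem le_normalizer_of_forall_conj
    (h : ∀ x ∈ H, ∀ y ∈ H, IsPElement p x → IsPRegular p y → Commute x y →
      ∃ k ∈ H, x ∈ normalizer ((conj k • A : Subgroup G) : Set G) ∧
        y ∈ centralizer ((conj k • A : Subgroup G) : Set G)) :
    H ≤ normalizer (A : Set G) := by
  refine le_of_forall_exists_conj_mem fun g hg => ?_
  obtain ⟨x, y, hx, hy, hxy, rfl⟩ := exists_isPElement_mul_isPRegular_eq p g
  have hxH : x ∈ H := zpowers_le.2 hg (hx.mem_zpowers_mul hy hxy)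
  obtain ⟨k, hk, hxk, hyk⟩ := h x hxH y ((mul_mem_cancel_left hxH).1 hg) hx hy hxy
  have hxyk := mem_normalizer_iff_conj_smul_eq.1 (mul_mem hxk (centralizer_le_normalizer _ hyk))
  refine ⟨k, hk, mem_normalizer_iff_conj_smul_eq.2 ?_⟩
  rw [conj_smul_mul, conj_smul_mul, map_inv, inv_smul_eq_iff, hxyk]

theorem mem_centralizer_of_forall_conj
    (h : ∀ x ∈ H, ∀ y ∈ H, IsPElement p x → IsPRegular p y → Commute x y →
      ∃ k ∈ H, x ∈ normalizer ((conj k • A : Subgroup G) : Set G) ∧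
        y ∈ centralizer ((conj k • A : Subgroup G) : Set G)) {y : G} (hyH : y ∈ H)
    (hy : IsPRegular p y) : y ∈ centralizer (A : Set G) := by
  obtain ⟨k, hk, -, hyk⟩ := h 1 (one_mem H) y hyH .one hy (.one_left y)
  rwa [mem_normalizer_iff_conj_smul_eq.1 (le_normalizer_of_forall_conj h hk)] at hyk

theorem IsSylowIn.exists_conj_of_centralized (hT : IsSylowIn p T H)
    (h : ∀ y ∈ H, IsPRegular p y → ∃ T', IsSylowIn p T' H ∧ y ∈ centralizer (T' : Set G))
    {x y : G} (hxH : x ∈ H) (hyH : y ∈ H) (hx : IsPElement p x) (hy : IsPRegular p y)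
    (hxy : Commute x y) :
    ∃ k ∈ H, x ∈ normalizer ((conj k • T : Subgroup G) : Set G) ∧
      y ∈ centralizer ((conj k • T : Subgroup G) : Set G) := by
  obtain ⟨T', hT', hyT'⟩ := h y hyH hy
  have hTy : IsSylowIn p T' (H ⊓ centralizer {y}) :=
    hT'.of_le (le_inf hT'.le (le_centralizer_singleton_iff.2 hyT')) inf_le_left
  obtain ⟨k, hk, hxk⟩ :=
    hTy.exists_mem_conj hx ⟨hxH, mem_centralizer_singleton_iff_commute.2 hxy⟩
  obtain ⟨l, hl, hlk⟩ := hT.exists_conj_eq (hT'.conj_smul_of_mem hk.1)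
  exact ⟨l, hl, hlk ▸ le_normalizer hxk, hlk ▸ le_centralizer_singleton_iff.1
    ((hTy.conj_smul_of_mem hk).le.trans inf_le_right)⟩

theorem IsSylowIn.le_normalizer_of_centralized (hT : IsSylowIn p T H)
    (h : ∀ y ∈ H, IsPRegular p y → ∃ T', IsSylowIn p T' H ∧ y ∈ centralizer (T' : Set G)) :
    H ≤ normalizer (T : Set G) :=
  le_normalizer_of_forall_conj fun _ hx _ hy => hT.exists_conj_of_centralized h hx hy

theorem IsSylowIn.mem_centralizer_of_centralized (hT : IsSylowIn p T H)
    (h : ∀ y ∈ H, IsPRegular p y → ∃ T', IsSylowIn p T' H ∧ y ∈ centralizer (T' : Set G))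
    {y : G} (hyH : y ∈ H) (hy : IsPRegular p y) : y ∈ centralizer (T : Set G) :=
  mem_centralizer_of_forall_conj (fun _ hx _ hy => hT.exists_conj_of_centralized h hx hy) hyH hy

theorem IsSylowIn.mem_of_le_normalizer (hT : IsSylowIn p T H) (hH : H ≤ normalizer (T : Set G))
    {x : G} (hx : IsPElement p x) (hxH : x ∈ H) : x ∈ T := by
  obtain ⟨k, hk, hxk⟩ := hT.exists_mem_conj hx hxH
  rwa [mem_normalizer_iff_conj_smul_eq.1 (hH hk)] at hxk

end Covering

section NormalComplement

variable {G : Type*} [Group G] {p : ℕ}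

/-- The subgroup formed by the `p`-regular elements of a group in which they are closed under
multiplication. -/
def pRegularSubgroup (p : ℕ) (G : Type*) [Group G]
    (h : ∀ a b : G, IsPRegular p a → IsPRegular p b → IsPRegular p (a * b)) : Subgroup G where
  carrier := {y | IsPRegular p y}
  mul_mem' := h _ _
  one_mem' := .one
  inv_mem' := .inv

theorem pRegularSubgroup_normal
    (h : ∀ a b : G, IsPRegular p a → IsPRegular p b → IsPRegular p (a * b)) :
    (pRegularSubgroup p G h).Normal :=
  ⟨fun _ hy => IsPRegular.conj hy⟩

theorem coprime_card_of_forall_isPRegular [Finite G] [hp : Fact p.Prime] {K : Subgroup G}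
    (h : ∀ k ∈ K, IsPRegular p k) : p.Coprime (Nat.card K) := by
  refine (Nat.Prime.coprime_iff_not_dvd hp.out).2 fun hdvd => ?_
  obtain ⟨x, hx⟩ := exists_prime_orderOf_dvd_card' p hdvd
  have hx' : p.Coprime (orderOf (x : G)) := h x x.2
  rw [orderOf_coe, hx, Nat.coprime_self] at hx'
  exact hp.out.ne_one hx'

theorem exists_normal_pComplement_of_isPRegular_mul [Finite G] [hp : Fact p.Prime]
    (h : ∀ a b : G, IsPRegular p a → IsPRegular p b → IsPRegular p (a * b)) :
    ∃ N : Subgroup G, N.Normal ∧ ¬ p ∣ Nat.card N ∧ ∃ k : ℕ, N.index = p ^ k := by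
  have hN := pRegularSubgroup_normal h
  refine ⟨pRegularSubgroup p G h, hN, (Nat.Prime.coprime_iff_not_dvd hp.out).1
    (coprime_card_of_forall_isPRegular fun _ hk => hk), IsPGroup.iff_card.1 fun g => ?_⟩
  obtain ⟨g, rfl⟩ := QuotientGroup.mk_surjective g
  obtain ⟨x, y, hx, hy, -, rfl⟩ := exists_isPElement_mul_isPRegular_eq p g
  obtain ⟨k, hk⟩ := isPElement_iff_exists_pow_eq_one.1 hx
  have hy1 : (y : G ⧸ pRegularSubgroup p G h) = 1 := (QuotientGroup.eq_one_iff y).2 hy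
  exact ⟨k, by rw [QuotientGroup.mk_mul, hy1, mul_one, ← QuotientGroup.mk_pow, hk,
    QuotientGroup.mk_one]⟩

end NormalComplement

section Burnside

variable {G : Type*} [Group G] {p : ℕ} {H T : Subgroup G} {y a b : G}

theorem isPRegular_coe {y : H} : IsPRegular p (y : G) ↔ IsPRegular p y := by
  rw [IsPRegular, orderOf_coe, IsPRegular]

theorem IsPRegular.map_eq_one {A : Type*} [Group A] [Fact p.Prime] (hy : IsPRegular p y)
    (hA : IsPGroup p A) (f : G →* A) : f y = 1 :=
  IsPElement.eq_one_of_isPRegular (IsPGroup.iff_orderOf.1 hA (f y))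
    (hy.coprime_dvd_right (orderOf_map_dvd f y))

variable [Finite G] [hp : Fact p.Prime]

theorem isPRegular_mul_of_normalizer_le_centralizer {P : Sylow p G}
    (hP : normalizer P ≤ centralizer (P : Set G)) (ha : IsPRegular p a) (hb : IsPRegular p b) :
    IsPRegular p (a * b) := by
  have hab : a * b ∈ (MonoidHom.transferSylow P hP).ker :=
    mul_mem (ha.map_eq_one P.2 _) (hb.map_eq_one P.2 _)
  have hcop := hp.out.coprime_iff_not_dvd.2 (MonoidHom.not_dvd_card_ker_transferSylow P hP)
  exact hcop.coprime_dvd_right (Subgroup.orderOf_dvd_natCard _ hab)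

theorem IsSylowIn.isPRegular_mul_of_normalizer_le_centralizer (hT : IsSylowIn p T H)
    (h : H ⊓ normalizer (T : Set G) ≤ centralizer (T : Set G))
    (ha : IsPRegular p a) (hb : IsPRegular p b) (haH : a ∈ H) (hbH : b ∈ H) :
    IsPRegular p (a * b) := by
  obtain ⟨S, hS⟩ := hT.exists_sylow_coe_eq
  have hSmem (t : H) : t ∈ S ↔ (t : G) ∈ T := SetLike.ext_iff.1 hS t
  have hNS : normalizer S ≤ centralizer (S : Set H) := fun g hg => by
    have hgT : (g : G) ∈ normalizer (T : Set G) := mem_normalizer_of_forall_conj_mem fun s hs =>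
      (hSmem _).1 ((mem_normalizer_iff.1 hg ⟨s, hT.le hs⟩).1 ((hSmem _).2 hs))
    have hgC := mem_centralizer_iff.1 (h ⟨g.2, hgT⟩)
    exact mem_centralizer_iff.2 fun t ht => Subtype.ext (hgC t ((hSmem t).1 ht))
  have hab := _root_.isPRegular_mul_of_normalizer_le_centralizer hNS (a := ⟨a, haH⟩)
    (b := ⟨b, hbH⟩) (isPRegular_coe.1 ha) (isPRegular_coe.1 hb)
  exact isPRegular_coe.2 hab

end Burnside

section PIndexExtremal

variable {G : Type*} [Group G] {p q : ℕ} {x y t : G} {P : Subgroup G}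

/-- The `p`-part of the order of the centralizer of `x`; it equals `|G|_p / |x^G|_p`. -/
noncomputable def centralizerPPart (p : ℕ) (x : G) : ℕ :=
  ordProj[p] (Nat.card (centralizer {x}))

/-- The class `R(p)*`, expressed through orders of centralizers instead of indices: `q < |G|_p` is
the common `p`-part of the centralizers of all elements of nontrivial `p`-index, and it is attained
at a `p`-element. -/
structure IsPIndexExtremalStar (p q : ℕ) (G : Type*) [Group G] : Prop where
  eq_or_eq (g : G) : centralizerPPart p g = ordProj[p] (Nat.card G) ∨ centralizerPPart p g = q
  lt : q < ordProj[p] (Nat.card G)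
  exists_eq : ∃ x : G, IsPElement p x ∧ centralizerPPart p x = q

theorem IsPIndexExtremalStar.le_centralizerPPart (h : IsPIndexExtremalStar p q G) (g : G) :
    q ≤ centralizerPPart p g := by
  rcases h.eq_or_eq g with hg | hg
  exacts [h.lt.le.trans_eq hg.symm, hg.ge]

theorem centralizerPPart_conj (g x : G) :
    centralizerPPart p (g * x * g⁻¹) = centralizerPPart p x := by
  rw [centralizerPPart, centralizerPPart, ← conj_smul_centralizer_singleton, card_conj_smul]

/-- The subgroup generated by the `p`-elements commuting with `x`. When `x` is a noncentral
`p`-element of a group in `R(p)*`, it is the normal Sylow `p`-subgroup of the centralizer of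
`x`. -/
def pCentralizer (p : ℕ) (x : G) : Subgroup G :=
  closure {t | IsPElement p t ∧ Commute t x}

theorem conj_smul_pCentralizer (g x : G) :
    conj g • pCentralizer p x = pCentralizer p (g * x * g⁻¹) := by
  rw [pCentralizer, pCentralizer, smul_closure]
  congr 1
  ext t
  rw [Set.mem_smul_set_iff_inv_smul_mem, ← map_inv, MulAut.smul_def, conj_apply, inv_inv]
  have hcomm : Commute (g⁻¹ * t * g) x ↔ Commute t (g * x * g⁻¹) := by
    rw [← commute_map_iff (conj g).injective]
    simp [mul_assoc]
  refine and_congr ⟨fun h => ?_, fun h => ?_⟩ hcomm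
  · simpa [mul_assoc] using h.conj g
  · simpa using h.conj g⁻¹

theorem centralizerPPart_mul_pIndex [Finite G] (p : ℕ) (x : G) :
    centralizerPPart p x * pIndex p x = ordProj[p] (Nat.card G) := by
  rw [← card_mul_index (centralizer {x}), Nat.factorization_mul Nat.card_pos.ne'
    index_ne_zero_of_finite, Finsupp.add_apply, pow_add]
  rfl

variable [Finite G] [hp : Fact p.Prime]

theorem centralizerPPart_eq_of_mem_centralizer (hP : IsSylowIn p P ⊤)
    (hy : y ∈ centralizer (P : Set G)) : centralizerPPart p y = ordProj[p] (Nat.card G) := by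
  rw [← card_top (G := G)]
  refine (ordProj_card_mono le_top).antisymm (hP.card_eq.ge.trans ?_)
  exact card_le_ordProj_card hP.isPGroup (le_centralizer_singleton_iff.2 hy)

theorem exists_isSylowIn_top_of_centralizerPPart_eq
    (hy : centralizerPPart p y = ordProj[p] (Nat.card G)) (hx : IsPElement p x)
    (hxy : Commute x y) : ∃ P, IsSylowIn p P ⊤ ∧ x ∈ P ∧ y ∈ centralizer (P : Set G) := by
  obtain ⟨P, hP, hxP⟩ :=
    hx.exists_isSylowIn_mem (mem_centralizer_singleton_iff_commute.2 hxy)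
  refine ⟨P, hP.of_card_le le_top ?_, hxP, le_centralizer_singleton_iff.1 hP.le⟩
  rw [card_top, ← hy, centralizerPPart]

theorem IsPIndexExtremalStar.centralizerPPart_eq_of_le (h : IsPIndexExtremalStar p q G)
    (hx : centralizerPPart p x = q) (hyx : centralizer {y} ≤ centralizer {x}) :
    centralizerPPart p y = q :=
  (h.eq_or_eq y).resolve_left fun hy =>
    (h.lt.trans_eq hy.symm).not_ge (hx ▸ ordProj_card_mono hyx)

theorem IsPIndexExtremalStar.exists_isSylowIn_of_isPRegular (h : IsPIndexExtremalStar p q G)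
    (hx : IsPElement p x) (hs : centralizerPPart p x = q) :
    ∀ y ∈ centralizer {x}, IsPRegular p y →
      ∃ T, IsSylowIn p T (centralizer {x}) ∧ y ∈ centralizer (T : Set G) := fun y hyx hy => by
  have hxy : Commute x y := (mem_centralizer_singleton_iff_commute.1 hyx).symm
  have hle := hx.centralizer_mul_le_left hy hxy
  obtain ⟨T, hT⟩ := exists_isSylowIn p (centralizer {x * y})
  refine ⟨T, hT.of_card_le hle ?_, le_centralizer_singleton_iff.1
    (hT.le.trans (hx.centralizer_mul_le_right hy hxy))⟩
  exact (hs.trans (h.centralizerPPart_eq_of_le hs hle).symm).le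

theorem IsPIndexExtremalStar.isSylowIn_pCentralizer_of_eq (h : IsPIndexExtremalStar p q G)
    (hx : IsPElement p x) (hs : centralizerPPart p x = q) :
    IsSylowIn p (pCentralizer p x) (centralizer {x}) := by
  obtain ⟨T, hT⟩ := exists_isSylowIn p (centralizer {x})
  have hnorm := hT.le_normalizer_of_centralized (h.exists_isSylowIn_of_isPRegular hx hs)
  suffices pCentralizer p x = T from this ▸ hT
  refine (closure_le _ |>.2 fun t ht => ?_).antisymm fun t ht => subset_closure
    ⟨isPElement_of_mem hT.isPGroup ht, mem_centralizer_singleton_iff_commute.1 (hT.le ht)⟩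
  exact hT.mem_of_le_normalizer hnorm ht.1 (mem_centralizer_singleton_iff_commute.2 ht.2)

theorem IsPIndexExtremalStar.mem_centralizer_pCentralizer_of_eq (h : IsPIndexExtremalStar p q G)
    (hx : IsPElement p x) (hs : centralizerPPart p x = q) (hy : IsPRegular p y)
    (hyx : Commute y x) : y ∈ centralizer (pCentralizer p x : Set G) :=
  (h.isSylowIn_pCentralizer_of_eq hx hs).mem_centralizer_of_centralized
    (h.exists_isSylowIn_of_isPRegular hx hs) (mem_centralizer_singleton_iff_commute.2 hyx) hy

theorem IsPIndexExtremalStar.commute_of_eq (h : IsPIndexExtremalStar p q G)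
    (hx : IsPElement p x) (hs : centralizerPPart p x = q) (ht : IsPElement p t)
    (htx : Commute t x) (hy : IsPRegular p y) (hyx : Commute y x) : Commute t y :=
  (mem_centralizer_iff_commute.1 (h.mem_centralizer_pCentralizer_of_eq hx hs hy hyx) t
    (subset_closure ⟨ht, htx⟩)).symm

theorem IsPIndexExtremalStar.isPRegular_mul_of_commute (h : IsPIndexExtremalStar p q G)
    (hx : IsPElement p x) (hs : centralizerPPart p x = q) {a b : G} (ha : IsPRegular p a)
    (hb : IsPRegular p b) (hax : Commute a x) (hbx : Commute b x) : IsPRegular p (a * b) := by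
  let L := centralizer {x} ⊓ centralizer (pCentralizer p x : Set G)
  have hmem {y : G} (hy : IsPRegular p y) (hyx : Commute y x) : y ∈ L :=
    ⟨mem_centralizer_singleton_iff_commute.2 hyx,
      h.mem_centralizer_pCentralizer_of_eq hx hs hy hyx⟩
  obtain ⟨T, hT⟩ := exists_isSylowIn p L
  refine hT.isPRegular_mul_of_normalizer_le_centralizer (fun g hg => ?_) ha hb (hmem ha hax)
    (hmem hb hbx)
  refine mem_centralizer_iff_commute.2 fun t ht => mem_centralizer_iff_commute.1 hg.1.2 t
    (subset_closure ⟨isPElement_of_mem hT.isPGroup ht, ?_⟩)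
  exact mem_centralizer_singleton_iff_commute.1 (hT.le ht).1

end PIndexExtremal

section CentralPElements

variable {G : Type*} [Group G] {p q : ℕ} {b : G}

theorem conj_smul_inf_centralizer (g : G) (P : Subgroup G) :
    conj g • (P ⊓ centralizer (P : Set G)) =
      conj g • P ⊓ centralizer ((conj g • P : Subgroup G) : Set G) := by
  rw [smul_inf]
  congr 1
  ext z
  simp only [mem_conj_smul_iff, mem_centralizer_iff_commute]
  have hcomm (t : G) : Commute (g⁻¹ * z * g) (g⁻¹ * t * g) ↔ Commute z t := by
    rw [← commute_map_iff (conj g).injective]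
    simp [mul_assoc]
  refine ⟨fun h t ht => (hcomm t).1 (h _ ht), fun h t ht => ?_⟩
  simpa [mul_assoc] using (hcomm (g * t * g⁻¹)).2 (h _ (by simpa [mul_assoc] using ht))

variable [Finite G] [hp : Fact p.Prime]

namespace IsPIndexExtremalStar

theorem exists_isSylowIn_top_or_exists_card_eq (h : IsPIndexExtremalStar p q G) (g : G) :
    (∃ P, IsSylowIn p P ⊤ ∧ ∀ z ∈ P ⊓ centralizer (P : Set G), Commute g z) ∨
      ∃ T : Subgroup G, Nat.card T = q ∧ ∀ t ∈ T, IsPElement p t ∧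
        centralizerPPart p t = ordProj[p] (Nat.card G) ∧ Commute g t := by
  obtain ⟨x, y, hx, hy, hxy, rfl⟩ := exists_isPElement_mul_isPRegular_eq p g
  rcases h.eq_or_eq x with hxbig | hxsmall
  · rcases h.eq_or_eq y with hybig | hysmall
    · obtain ⟨P, hP, hxP, hyP⟩ := exists_isSylowIn_top_of_centralizerPPart_eq hybig hx hxy
      exact .inl ⟨P, hP, fun z hz => (mem_centralizer_iff_commute.1 hz.2 x hxP).symm.mul_left
        (mem_centralizer_iff_commute.1 hyP z hz.1)⟩
    · have hlex := hx.centralizer_mul_le_left hy hxy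
      have hley := hx.centralizer_mul_le_right hy hxy
      obtain ⟨T, hT⟩ := exists_isSylowIn p (centralizer {x * y})
      by_cases hsmall : ∃ t ∈ T, centralizerPPart p t = q
      · obtain ⟨t, ht, hts⟩ := hsmall
        have htp := isPElement_of_mem hT.isPGroup ht
        have htx := mem_centralizer_singleton_iff_commute.1 (hlex (hT.le ht))
        have hty := mem_centralizer_singleton_iff_commute.1 (hley (hT.le ht))
        obtain ⟨P, hP, htP, hxP⟩ := exists_isSylowIn_top_of_centralizerPPart_eq hxbig htp htx
        refine .inl ⟨P, hP, fun z hz => (mem_centralizer_iff_commute.1 hxP z hz.1).mul_left ?_⟩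
        exact (h.commute_of_eq htp hts (isPElement_of_mem hP.isPGroup hz.1)
          (mem_centralizer_iff_commute.1 hz.2 t htP) hy hty.symm).symm
      · push Not at hsmall
        refine .inr ⟨T, hT.card_eq.trans (h.centralizerPPart_eq_of_le hysmall hley), fun t ht =>
          ⟨isPElement_of_mem hT.isPGroup ht, (h.eq_or_eq t).resolve_right (hsmall t ht), ?_⟩⟩
        exact (mem_centralizer_singleton_iff_commute.1 (hT.le ht)).symm
  · obtain ⟨P, hP, hxP⟩ := hx.exists_isSylowIn_mem (mem_top x)
    refine .inl ⟨P, hP, fun z hz => ?_⟩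
    have hzx : Commute z x := mem_centralizer_iff_commute.1 hz.2 x hxP
    exact hzx.symm.mul_left (h.commute_of_eq hx hxsmall (isPElement_of_mem hP.isPGroup hz.1) hzx
      hy hxy.symm).symm

theorem commute_of_centralizerPPart_eq (h : IsPIndexExtremalStar p q G) (hb : IsPElement p b)
    (hbig : centralizerPPart p b = ordProj[p] (Nat.card G)) (g : G) : Commute g b := by
  obtain ⟨x₀, hx₀, hs₀⟩ := h.exists_eq
  obtain ⟨P₀, hP₀, hx₀P₀⟩ := hx₀.exists_isSylowIn_mem (mem_top x₀)
  let B : Set G := {b | IsPElement p b ∧ centralizerPPart p b = ordProj[p] (Nat.card G)}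
  let S : Subgroup G := P₀ ⊓ centralizer (P₀ : Set G)
  have hconj : ∀ b ∈ B, ∀ g : G, g * b * g⁻¹ ∈ B := fun b hb g =>
    ⟨hb.1.conj g, (centralizerPPart_conj g b).trans hb.2⟩
  have hmeet : ∀ b ∈ B, ∃ g : G, g * b * g⁻¹ ∈ (S : Set G) := fun b hb => by
    obtain ⟨P, hP, hbP, hPb⟩ :=
      exists_isSylowIn_top_of_centralizerPPart_eq hb.2 hb.1 (Commute.refl b)
    obtain ⟨k, -, rfl⟩ := hP₀.exists_conj_eq hP
    refine ⟨k⁻¹, ?_⟩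
    rw [inv_inv, SetLike.mem_coe, ← mem_conj_smul_iff, conj_smul_inf_centralizer]
    exact ⟨hbP, hPb⟩
  refine commute_of_ncard_le_ncard_commute hconj hmeet (fun g => ?_) ⟨hb, hbig⟩ g
  rw [← Nat.card_coe_set_eq]
  rcases h.exists_isSylowIn_top_or_exists_card_eq g with ⟨P, hP, hgP⟩ | ⟨T, hT, hgT⟩
  · obtain ⟨k, -, rfl⟩ := hP₀.exists_conj_eq hP
    rw [SetLike.coe_sort_coe, ← card_conj_smul k, conj_smul_inf_centralizer]
    exact Set.ncard_le_ncard fun z hz => ⟨⟨isPElement_of_mem hP.isPGroup hz.1,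
      centralizerPPart_eq_of_mem_centralizer hP hz.2⟩, hgP z hz⟩
  · have hST : Nat.card S ≤ Nat.card T := by
      rw [hT, ← hs₀]
      exact card_le_ordProj_card (hP₀.isPGroup.to_le inf_le_left)
        (inf_le_right.trans (centralizer_le (Set.singleton_subset_iff.2 hx₀P₀)))
    exact hST.trans (Set.ncard_le_ncard fun t ht =>
      ⟨⟨(hgT t ht).1, (hgT t ht).2.1⟩, (hgT t ht).2.2⟩)

end IsPIndexExtremalStar

end CentralPElements

section Noncentral

variable {G : Type*} [Group G] {p q : ℕ} {g x y z t : G} {T H Q : Subgroup G}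

theorem exists_mem_normalizer_of_lt [Finite G] [hp : Fact p.Prime] {D : Subgroup G}
    (hQ : IsPGroup p Q) (h : D < Q) : ∃ n ∈ Q, n ∉ D ∧ n ∈ normalizer (D : Set G) := by
  have := hQ.isNilpotent
  have hlt : D.subgroupOf Q < ⊤ :=
    lt_top_iff_ne_top.2 fun htop => h.not_ge (subgroupOf_eq_top.1 htop)
  obtain ⟨n, hn, hnD⟩ :=
    SetLike.exists_of_lt (Group.normalizerCondition_of_isNilpotent (G := Q) _ hlt)
  exact ⟨n, n.2, hnD, mem_normalizer_of_forall_conj_mem fun t ht =>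
    (mem_normalizer_iff.1 hn ⟨t, h.le ht⟩).1 ht⟩

variable [hp : Fact p.Prime]

/-- The subgroup of central `p`-elements. -/
def pCenter (p : ℕ) (G : Type*) [Group G] [Fact p.Prime] : Subgroup G where
  carrier := {z | IsPElement p z ∧ ∀ g, Commute g z}
  mul_mem' ha hb := ⟨ha.1.mul hb.1 (hb.2 _), fun g => (ha.2 g).mul_right (hb.2 g)⟩
  one_mem' := ⟨.one, .one_right⟩
  inv_mem' ha := ⟨ha.1.inv, fun g => (ha.2 g).inv_right⟩

instance pCenter_normal : (pCenter p G).Normal :=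
  ⟨fun z hz g => by rwa [(hz.2 g).eq, mul_inv_cancel_right]⟩

theorem isPGroup_pCenter : IsPGroup p (pCenter p G) :=
  isPGroup_of_forall_isPElement fun _ hz => hz.1

theorem pCenter_le_centralizer (S : Set G) : pCenter p G ≤ centralizer S := fun _ hz =>
  mem_centralizer_iff.2 fun s _ => hz.2 s

theorem conj_mem_pCenter_iff : g * z * g⁻¹ ∈ pCenter p G ↔ z ∈ pCenter p G :=
  (Normal.mem_comm_iff inferInstance).trans (by rw [inv_mul_cancel_left])

/-- Noncentral `p`-elements, with centrality expressed by membership in `pCenter`. -/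
structure IsNoncentralPElement (p : ℕ) [Fact p.Prime] (x : G) : Prop where
  isPElement : IsPElement p x
  notMem : x ∉ pCenter p G

theorem isNoncentralPElement_of_mem (hQ : IsPGroup p Q) (hx : x ∈ Q) (hxZ : x ∉ pCenter p G) :
    IsNoncentralPElement p x :=
  ⟨isPElement_of_mem hQ hx, hxZ⟩

theorem IsNoncentralPElement.conj (hx : IsNoncentralPElement p x) (g : G) :
    IsNoncentralPElement p (g * x * g⁻¹) :=
  ⟨hx.isPElement.conj g, conj_mem_pCenter_iff.not.2 hx.notMem⟩

theorem IsPIndexExtremalStar.isNoncentralPElement_of_eq (h : IsPIndexExtremalStar p q G)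
    (hx : IsPElement p x) (hs : centralizerPPart p x = q) : IsNoncentralPElement p x := by
  refine ⟨hx, fun hxZ => h.lt.ne ?_⟩
  have htop : centralizer {x} = ⊤ :=
    eq_top_iff.2 fun g _ => mem_centralizer_singleton_iff_commute.2 (hxZ.2 g)
  rw [← hs, centralizerPPart, htop, card_top]

variable [Finite G]

theorem IsSylowIn.pCenter_le (hT : IsSylowIn p T H) (hZ : pCenter p G ≤ H) : pCenter p G ≤ T :=
  hT.le_of_le_normalizer isPGroup_pCenter hZ
    ((pCenter_le_centralizer T).trans (centralizer_le_normalizer _))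

namespace IsPIndexExtremalStar

theorem centralizerPPart_eq (h : IsPIndexExtremalStar p q G) (hx : IsNoncentralPElement p x) :
    centralizerPPart p x = q :=
  (h.eq_or_eq x).resolve_left fun hbig =>
    hx.notMem ⟨hx.isPElement, h.commute_of_centralizerPPart_eq hx.isPElement hbig⟩

theorem isSylowIn_pCentralizer (h : IsPIndexExtremalStar p q G) (hx : IsNoncentralPElement p x) :
    IsSylowIn p (pCentralizer p x) (centralizer {x}) :=
  h.isSylowIn_pCentralizer_of_eq hx.isPElement (h.centralizerPPart_eq hx)

theorem isPGroup_pCentralizer (h : IsPIndexExtremalStar p q G) (hx : IsNoncentralPElement p x) :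
    IsPGroup p (pCentralizer p x) :=
  (h.isSylowIn_pCentralizer hx).isPGroup

theorem card_pCentralizer (h : IsPIndexExtremalStar p q G) (hx : IsNoncentralPElement p x) :
    Nat.card (pCentralizer p x) = q :=
  (h.isSylowIn_pCentralizer hx).card_eq.trans (h.centralizerPPart_eq hx)

theorem mem_pCentralizer_iff (h : IsPIndexExtremalStar p q G) (hx : IsNoncentralPElement p x) :
    t ∈ pCentralizer p x ↔ IsPElement p t ∧ Commute t x :=
  ⟨fun ht => ⟨isPElement_of_mem (h.isPGroup_pCentralizer hx) ht,
    mem_centralizer_singleton_iff_commute.1 ((h.isSylowIn_pCentralizer hx).le ht)⟩,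
    fun ht => subset_closure ht⟩

theorem mem_centralizer_pCentralizer (h : IsPIndexExtremalStar p q G)
    (hx : IsNoncentralPElement p x) (hy : IsPRegular p y) (hyx : Commute y x) :
    y ∈ centralizer (pCentralizer p x : Set G) :=
  h.mem_centralizer_pCentralizer_of_eq hx.isPElement (h.centralizerPPart_eq hx) hy hyx

theorem prime_mul_card_pCenter_le (h : IsPIndexExtremalStar p q G) :
    p * Nat.card (pCenter p G) ≤ q := by
  obtain ⟨x, hx, hs⟩ := h.exists_eq
  have hx' := h.isNoncentralPElement_of_eq hx hs
  have hX := h.isSylowIn_pCentralizer hx'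
  have hlt : pCenter p G < pCentralizer p x :=
    (hX.pCenter_le (pCenter_le_centralizer _)).lt_of_not_ge fun hle =>
      hx'.notMem (hle ((h.mem_pCentralizer_iff hx').2 ⟨hx, Commute.refl x⟩))
  rw [← ordProj_card_eq_of_isPGroup isPGroup_pCenter, ← h.card_pCentralizer hx',
    ← ordProj_card_eq_of_isPGroup hX.isPGroup]
  refine mul_ordProj_le_of_lt ?_
  rw [ordProj_card_eq_of_isPGroup isPGroup_pCenter, ordProj_card_eq_of_isPGroup hX.isPGroup]
  exact lt_of_not_ge fun hle => hlt.ne (eq_of_le_of_card_ge hlt.le hle)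

theorem card_pCenter_lt (h : IsPIndexExtremalStar p q G) : Nat.card (pCenter p G) < q :=
  (lt_mul_of_one_lt_left Nat.card_pos hp.out.one_lt).trans_le h.prime_mul_card_pCenter_le

theorem exists_isNoncentralPElement_mem (h : IsPIndexExtremalStar p q G) (hT : IsPGroup p T)
    (hcard : q ≤ Nat.card T) : ∃ t ∈ T, IsNoncentralPElement p t := by
  by_contra! hcon
  refine (h.card_pCenter_lt.trans_le hcard).not_ge (card_le_of_le fun t ht => ?_)
  by_contra htZ
  exact hcon t ht (isNoncentralPElement_of_mem hT ht htZ)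

theorem mem_centralizer_of_commute (h : IsPIndexExtremalStar p q G) (hQ : IsPGroup p Q)
    (hy : IsPRegular p y) (hyQ : y ∈ normalizer (Q : Set G)) (htQ : t ∈ Q)
    (ht : IsNoncentralPElement p t) (hty : Commute t y) : y ∈ centralizer (Q : Set G) := by
  by_contra hcon
  have hlt : Q ⊓ centralizer {y} < Q := inf_le_left.lt_of_not_ge fun hle =>
    hcon (le_centralizer_singleton_iff.1 (hle.trans inf_le_right))
  obtain ⟨n, hnQ, hnD, hn⟩ := exists_mem_normalizer_of_lt hQ hlt
  have htn : Commute (n⁻¹ * t * n) y := mem_centralizer_singleton_iff_commute.1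
    (inv_conj_mem_of_mem_normalizer hn
      ⟨htQ, mem_centralizer_singleton_iff_commute.2 hty⟩).2
  have htyn : Commute t (n * y * n⁻¹) := by
    simpa [mul_assoc] using htn.map (conj n)
  have hcQ : y⁻¹ * (n * y * n⁻¹) ∈ Q := by
    have := mul_mem (inv_conj_mem_of_mem_normalizer hyQ hnQ) (inv_mem hnQ)
    simpa only [mul_assoc] using this
  have hcp := isPElement_of_mem hQ hcQ
  have hcy : Commute (y⁻¹ * (n * y * n⁻¹)) y :=
    h.commute_of_eq ht.isPElement (h.centralizerPPart_eq ht) hcp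
      (hty.inv_right.mul_right htyn).symm hy hty.symm
  have hyny : Commute y (n * y * n⁻¹) := by
    simpa using (Commute.refl y).mul_right hcy.symm
  have hc : y⁻¹ * (n * y * n⁻¹) = 1 :=
    hcp.eq_one_of_isPRegular (hy.inv.mul (hy.conj n) hyny.inv_left)
  refine hnD ⟨hnQ, mem_centralizer_singleton_iff_commute.2 ?_⟩
  rw [inv_mul_eq_one, eq_comm, mul_inv_eq_iff_eq_mul] at hc
  exact hc

end IsPIndexExtremalStar

end Noncentral

section Norm

variable {V : Type*} [CommGroup V] {n : ℕ}

theorem apply_prod_range_pow_apply {e : MulAut V} (he : e ^ n = 1) (v : V) :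
    e (∏ k ∈ Finset.range n, (e ^ k) v) = ∏ k ∈ Finset.range n, (e ^ k) v := by
  have hsucc := Finset.prod_range_succ' (fun k => (e ^ k) v) n
  rw [Finset.prod_range_succ, he, pow_zero] at hsucc
  rw [map_prod, mul_right_cancel hsucc]
  exact Finset.prod_congr rfl fun k _ => by rw [pow_succ', mul_apply]

/- The double product of `(α * β ^ j) ^ i` applied to `v` lies in `U` when first taken over `i`.
Taken over `j` first, the terms with `i ≠ 0` lie in `U` as well, and those with `i = 0` contribute
`v ^ n`. -/
theorem pow_mem_of_forall_apply_eq_mem {α β : MulAut V} (hn : 1 < n) (hα : α ^ n = 1)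
    (hβ : β ^ n = 1) (hαβ : Commute α β) {U : Subgroup V}
    (hU : ∀ i < n, ∀ j < n, i ≠ 0 ∨ j ≠ 0 → ∀ v, (α ^ i * β ^ j) v = v → v ∈ U) (v : V) :
    v ^ n ∈ U := by
  have hrows : ∏ j ∈ Finset.range n, ∏ i ∈ Finset.range n, ((α * β ^ j) ^ i) v ∈ U := by
    refine prod_mem fun j hj => hU 1 hn j (Finset.mem_range.1 hj) (.inl one_ne_zero) _ ?_
    rw [pow_one]
    refine apply_prod_range_pow_apply ?_ v
    rw [(hαβ.pow_right j).mul_pow, hα, pow_right_comm, hβ, one_pow, one_mul]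
  have hcolumns :
      ∏ i ∈ (Finset.range n).erase 0, ∏ j ∈ Finset.range n, ((α * β ^ j) ^ i) v ∈ U := by
    refine prod_mem fun i hi => ?_
    obtain ⟨hi0, hin⟩ := Finset.mem_erase.1 hi
    have hcolumn : ∏ j ∈ Finset.range n, ((α * β ^ j) ^ i) v =
        ∏ j ∈ Finset.range n, ((β ^ i) ^ j) ((α ^ i) v) :=
      Finset.prod_congr rfl fun j _ => by
        rw [(hαβ.pow_right j).mul_pow, pow_right_comm, ((hαβ.pow_pow i i).pow_right j).eq,
          mul_apply]
    refine hU 0 (zero_lt_one.trans hn) i (Finset.mem_range.1 hin) (.inr hi0) _ ?_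
    rw [hcolumn, pow_zero, one_mul]
    exact apply_prod_range_pow_apply (by rw [pow_right_comm, hβ, one_pow]) _
  rw [Finset.prod_comm, ← Finset.mul_prod_erase _ _ (Finset.mem_range.2 (zero_lt_one.trans hn)),
    U.mul_mem_cancel_right hcolumns] at hrows
  simpa only [pow_zero, one_apply, Finset.prod_const, Finset.card_range] using hrows

end Norm

section CoprimeAction

variable {G : Type*} [Group G] {p r : ℕ} {a b e k v : G} {A K M R : Subgroup G}

theorem IsPElement.commute_of_commute_commutatorElement (he : IsPElement p e)
    (hc : IsPRegular p ⁅e, v⁆) (hec : Commute e ⁅e, v⁆) [Fact p.Prime] : Commute e v := by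
  have hv : v * e⁻¹ * v⁻¹ = e⁻¹ * ⁅e, v⁆ := by
    rw [commutatorElement_def]; group
  have hce : IsPElement p ⁅e, v⁆ := by
    have := he.mul (hv ▸ he.inv.conj v) ?_
    · rwa [mul_inv_cancel_left] at this
    · exact ((Commute.refl e).inv_right).mul_right hec
  exact commutatorElement_eq_one_iff_commute.1 (hce.eq_one_of_isPRegular hc)

theorem commutator_lt_of_isPGroup [Fact r.Prime] (hR : IsPGroup r R) [Finite R] (hbot : R ≠ ⊥) :
    ⁅R, R⁆ < R := by
  have := hR.isNilpotent
  have := (nontrivial_iff_ne_bot R).2 hbot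
  have hlt := Group.IsSolvable.commutator_lt_top_of_nontrivial R
  rwa [← map_lt_map_iff_of_injective R.subtype_injective, map_subtype_commutator,
    ← MonoidHom.range_eq_map, range_subtype] at hlt

/-- Automorphisms of a group acting on its abelianization. -/
def abelianizationAut (K : Type*) [Group K] : MulAut K →* MulAut (Abelianization K) :=
  MonoidHom.mk' (·.abelianizationCongr) fun e f => (abelianizationCongr_trans f e).symm

theorem commutatorElement_mem_of_abelianizationAut_of_eq {e : normalizer (K : Set G)} {k : K}
    (h : abelianizationAut K (K.normalizerMonoidHom e) (Abelianization.of k) =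
      Abelianization.of k) : ⁅(e : G), (k : G)⁆ ∈ ⁅K, K⁆ := by
  have hmem : K.normalizerMonoidHom e k * k⁻¹ ∈ commutator K := by
    rw [← Abelianization.ker_of, MonoidHom.mem_ker, map_mul, map_inv, mul_inv_eq_one]
    exact h
  rw [← map_subtype_commutator]
  exact ⟨_, hmem, rfl⟩

theorem IsPRegular.mem_of_pow_mem (hk : IsPRegular p k) (h : k ^ p ∈ M) : k ∈ M :=
  zpowers_le.2 h (mem_zpowers_pow_iff.2 hk)

theorem normalizer_le_normalizer_commutator :
    normalizer (K : Set G) ≤ normalizer ((⁅K, K⁆ : Subgroup G) : Set G) := fun g hg => by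
  rw [mem_normalizer_iff_conj_smul_eq] at hg ⊢
  calc conj g • ⁅K, K⁆ = ⁅conj g • K, conj g • K⁆ := map_commutator K K _
    _ = ⁅K, K⁆ := by rw [hg]

theorem exists_pow_mul_inv_mem_commutator [hp : Fact p.Prime] (hK : ∀ k ∈ K, IsPRegular p k)
    (hA : IsPGroup p A) (hAK : A ≤ normalizer (K : Set G))
    (hpow : ∀ a ∈ A, a ^ p ∈ centralizer (K : Set G)) (hcomm : ⁅A, A⁆ ≤ centralizer (K : Set G))
    (ha : a ∈ A) (hb : b ∈ A) (hfix : ∀ i < p, ∀ j < p, i ≠ 0 ∨ j ≠ 0 →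
      K ⊓ centralizer {a ^ i * b ^ j} ≤ centralizer (A : Set G))
    (hKK : ⁅K, K⁆ ≤ centralizer (A : Set G)) (hk : k ∈ K) :
    ∃ u ∈ centralizer (A : Set G), k ^ p * u⁻¹ ∈ ⁅K, K⁆ := by
  let φ := (abelianizationAut K).comp K.normalizerMonoidHom
  have hφ : ∀ e : normalizer (K : Set G), (e : G) ∈ centralizer (K : Set G) → φ e = 1 :=
    fun e he => by
      have hker : e ∈ K.normalizerMonoidHom.ker := by
        rwa [normalizerMonoidHom_ker, mem_subgroupOf]
      rw [MonoidHom.comp_apply, MonoidHom.mem_ker.1 hker, map_one]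
  have hkp : Abelianization.of (⟨k, hk⟩ : K) ^ p ∈
      ((centralizer (A : Set G)).subgroupOf K).map Abelianization.of := by
    refine pow_mem_of_forall_apply_eq_mem (α := φ ⟨a, hAK ha⟩) (β := φ ⟨b, hAK hb⟩)
      hp.out.one_lt ?_ ?_ ?_ ?_ _
    · rw [← map_pow]; exact hφ _ (hpow a ha)
    · rw [← map_pow]; exact hφ _ (hpow b hb)
    · rw [← commutatorElement_eq_one_iff_commute, ← map_commutatorElement]
      exact hφ _ (hcomm (commutator_mem_commutator ha hb))
    · intro i hi j hj hij v hv
      obtain ⟨v, rfl⟩ := QuotientGroup.mk_surjective v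
      rw [← map_pow, ← map_pow, ← map_mul] at hv
      have heA := mul_mem (pow_mem ha i) (pow_mem hb j)
      have hmem := commutatorElement_mem_of_abelianizationAut_of_eq hv
      have hev := (isPElement_of_mem hA heA).commute_of_commute_commutatorElement
        (hK _ (commutator_le_self K hmem)) (mem_centralizer_iff_commute.1 (hKK hmem) _ heA).symm
      exact ⟨v, hfix i hi j hj hij ⟨v.2, mem_centralizer_singleton_iff_commute.2 hev.symm⟩, rfl⟩
  obtain ⟨u, hu, huk⟩ := hkp
  have hdiv : (⟨k, hk⟩ : K) ^ p * u⁻¹ ∈ commutator K := by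
    rw [← Abelianization.ker_of, MonoidHom.mem_ker, map_mul, map_inv, map_pow, huk, mul_inv_cancel]
  exact ⟨u, hu, map_subtype_commutator K ▸ ⟨_, hdiv, rfl⟩⟩

variable [Finite G]

theorem le_of_forall_prime_isSylowIn_le
    (h : ∀ r : ℕ, r.Prime → ∃ R, IsSylowIn r R K ∧ R ≤ M) : K ≤ M := by
  refine inf_eq_left.1 (eq_of_le_of_card_ge inf_le_left (Nat.le_of_dvd Nat.card_pos ?_))
  rw [← Nat.factorization_prime_le_iff_dvd Nat.card_pos.ne' Nat.card_pos.ne']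
  intro r hr
  obtain ⟨R, hR, hRM⟩ := h r hr
  rw [← hr.pow_dvd_iff_le_factorization Nat.card_pos.ne', ← hR.card_eq]
  exact card_dvd_of_le (le_inf hR.le hRM)

variable [hp : Fact p.Prime]

theorem exists_isSylowIn_le_normalizer [Fact r.Prime] (hK : p.Coprime (Nat.card K))
    (hA : IsPGroup p A) (hAK : A ≤ normalizer (K : Set G)) :
    ∃ R, IsSylowIn r R K ∧ A ≤ normalizer (R : Set G) := by
  let _ : MulDistribMulAction A K :=
    MulDistribMulAction.compHom K (K.normalizerMonoidHom.comp (inclusion hAK))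
  have hcard : ¬ p ∣ Nat.card (Sylow r K) := fun hdvd =>
    (Nat.Prime.coprime_iff_not_dvd hp.out).1 hK
      ((hdvd.trans (Sylow.card_dvd_index default)).trans (index_dvd_card _))
  obtain ⟨S, hS⟩ := hA.nonempty_fixed_point_of_prime_not_dvd_card (Sylow r K) hcard
  refine ⟨(S : Subgroup K).map K.subtype, ⟨map_subtype_le _, S.2.map _, ?_⟩, fun a ha => ?_⟩
  · rw [card_map_of_injective K.subtype_injective]
    exact S.card_eq_multiplicity
  · refine mem_normalizer_of_forall_conj_mem ?_
    rintro _ ⟨s, hs, rfl⟩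
    have hmem : (⟨a, ha⟩ : A) • s ∈ ((⟨a, ha⟩ : A) • S : Sylow r K) :=
      smul_mem_pointwise_smul s _ _ hs
    rw [hS ⟨a, ha⟩] at hmem
    exact ⟨_, hmem, rfl⟩

theorem le_centralizer_of_inf_centralizer_le (hK : ∀ k ∈ K, IsPRegular p k)
    (hA : IsPGroup p A) (hAK : A ≤ normalizer (K : Set G))
    (hpow : ∀ a ∈ A, a ^ p ∈ centralizer (K : Set G)) (hcomm : ⁅A, A⁆ ≤ centralizer (K : Set G))
    (ha : a ∈ A) (hb : b ∈ A) (hfix : ∀ i < p, ∀ j < p, i ≠ 0 ∨ j ≠ 0 →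
      K ⊓ centralizer {a ^ i * b ^ j} ≤ centralizer (A : Set G)) :
    K ≤ centralizer (A : Set G) := by
  induction hn : Nat.card K using Nat.strong_induction_on generalizing K with
  | _ n ih =>
    subst hn
    have hlt : ∀ L < K, A ≤ normalizer (L : Set G) → L ≤ centralizer (A : Set G) := fun L hL hAL =>
      ih _ (Set.Finite.card_lt_card (Set.toFinite _) hL) (fun k hk => hK k (hL.le hk)) hAL
        (fun a ha => centralizer_le hL.le (hpow a ha)) (hcomm.trans (centralizer_le hL.le))
        (fun i hi j hj hij => (inf_le_inf_right _ hL.le).trans (hfix i hi j hj hij)) rfl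
    rcases (commutator_le_self K).lt_or_eq with hKK | hKK
    · have hKKA := hlt _ hKK (hAK.trans normalizer_le_normalizer_commutator)
      intro k hk
      obtain ⟨u, hu, hku⟩ :=
        exists_pow_mul_inv_mem_commutator hK hA hAK hpow hcomm ha hb hfix hKKA hk
      refine (hK k hk).mem_of_pow_mem ?_
      rw [← inv_mul_cancel_right (k ^ p) u]
      exact mul_mem (hKKA hku) hu
    · refine le_of_forall_prime_isSylowIn_le fun r hr => ?_
      have : Fact r.Prime := ⟨hr⟩
      obtain ⟨R, hR, hAR⟩ := exists_isSylowIn_le_normalizer (r := r)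
        (coprime_card_of_forall_isPRegular hK) hA hAK
      refine ⟨R, hR, ?_⟩
      rcases eq_or_ne R ⊥ with rfl | hbot
      · exact bot_le
      · refine hlt R (hR.le.lt_of_ne fun hRK => ?_) hAR
        exact (commutator_lt_of_isPGroup hR.isPGroup hbot).ne (hRK ▸ hKK)

end CoprimeAction

section RegularCentralizer

variable {G : Type*} [Group G] [Finite G] {p q : ℕ} [hp : Fact p.Prime] {x y t : G}
  {A P : Subgroup G}

/-- The Sylow `p`-subgroups, necessarily of order `q`, of the centralizers of the `p`-regular
elements `y` with `centralizerPPart p y = q`. -/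
def IsPRegularCentralizerSylow (p q : ℕ) {G : Type*} [Group G] (A : Subgroup G) : Prop :=
  ∃ y, IsPRegular p y ∧ centralizerPPart p y = q ∧ IsSylowIn p A (centralizer {y})

namespace IsPRegularCentralizerSylow

omit [Finite G] hp in
theorem card_eq (hA : IsPRegularCentralizerSylow p q A) : Nat.card A = q := by
  obtain ⟨y, -, hs, hAy⟩ := hA
  exact hAy.card_eq.trans hs

omit [Finite G] hp in
theorem isPGroup (hA : IsPRegularCentralizerSylow p q A) : IsPGroup p A := by
  obtain ⟨y, -, -, hAy⟩ := hA
  exact hAy.isPGroup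

omit [Finite G] hp in
theorem conj_smul (hA : IsPRegularCentralizerSylow p q A) (g : G) :
    IsPRegularCentralizerSylow p q (conj g • A) := by
  obtain ⟨y, hy, hs, hAy⟩ := hA
  refine ⟨g * y * g⁻¹, hy.conj g, (centralizerPPart_conj g y).trans hs, ?_⟩
  rw [← conj_smul_centralizer_singleton]
  exact hAy.conj_smul g

end IsPRegularCentralizerSylow

namespace IsPIndexExtremalStar

theorem mem_pCentralizer_self (h : IsPIndexExtremalStar p q G) (hx : IsNoncentralPElement p x) :
    x ∈ pCentralizer p x :=
  (h.mem_pCentralizer_iff hx).2 ⟨hx.isPElement, Commute.refl x⟩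

theorem isSylowIn_pCentralizer_of_commute (h : IsPIndexExtremalStar p q G)
    (ht : IsNoncentralPElement p t) (hy : IsPRegular p y) (hs : centralizerPPart p y = q)
    (hyt : Commute y t) : IsSylowIn p (pCentralizer p t) (centralizer {y}) :=
  isSylowIn_of_le_card (h.isPGroup_pCentralizer ht)
    (le_centralizer_singleton_iff.2 (h.mem_centralizer_pCentralizer ht hy hyt))
    (hs.le.trans (h.card_pCentralizer ht).ge)

theorem exists_eq_pCentralizer (h : IsPIndexExtremalStar p q G)
    (hA : IsPRegularCentralizerSylow p q A) :
    ∃ t ∈ A, IsNoncentralPElement p t ∧ A = pCentralizer p t := by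
  obtain ⟨s, hsA, hsn⟩ := h.exists_isNoncentralPElement_mem hA.isPGroup hA.card_eq.ge
  obtain ⟨y, hy, hs, hAy⟩ := hA
  have hys : Commute y s := (mem_centralizer_singleton_iff_commute.1 (hAy.le hsA)).symm
  obtain ⟨k, -, rfl⟩ := (h.isSylowIn_pCentralizer_of_commute hsn hy hs hys).exists_conj_eq hAy
  exact ⟨k * s * k⁻¹, conj_mem_conj_smul_iff.2 (h.mem_pCentralizer_self hsn), hsn.conj k,
    conj_smul_pCentralizer k s⟩

theorem isPRegular_mul_of_forall_exists_conj_eq (h : IsPIndexExtremalStar p q G)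
    (hP : IsSylowIn p P ⊤) (hAP : A ≤ P) (hPA : P ≤ normalizer (A : Set G)) (hxA : x ∈ A)
    (hx : IsNoncentralPElement p x)
    (hA : ∀ A', IsPRegularCentralizerSylow p q A' → ∃ k : G, A' = conj k • A) {a b : G}
    (ha : IsPRegular p a) (hb : IsPRegular p b) : IsPRegular p (a * b) := by
  have hcover : ∀ x ∈ (⊤ : Subgroup G), ∀ y ∈ (⊤ : Subgroup G), IsPElement p x →
      IsPRegular p y → Commute x y → ∃ k ∈ (⊤ : Subgroup G),
        x ∈ normalizer ((conj k • A : Subgroup G) : Set G) ∧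
          y ∈ centralizer ((conj k • A : Subgroup G) : Set G) := by
    intro x _ y _ hx hy hxy
    rcases h.eq_or_eq y with hbig | hsmall
    · obtain ⟨P', hP', hxP', hyP'⟩ := exists_isSylowIn_top_of_centralizerPPart_eq hbig hx hxy
      obtain ⟨k, hk, rfl⟩ := hP.exists_conj_eq hP'
      refine ⟨k, hk, ?_, centralizer_le (pointwise_smul_le_pointwise_smul_iff.2 hAP) hyP'⟩
      exact mem_normalizer_conj_smul_iff.2 (hPA (mem_conj_smul_iff.1 hxP'))
    · obtain ⟨T, hT, hxT⟩ :=
        hx.exists_isSylowIn_mem (mem_centralizer_singleton_iff_commute.2 hxy)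
      obtain ⟨k, rfl⟩ := hA T ⟨y, hy, hsmall, hT⟩
      exact ⟨k, mem_top k, le_normalizer hxT, le_centralizer_singleton_iff.1 hT.le⟩
  have hcomm {y : G} (hy : IsPRegular p y) : Commute y x :=
    (mem_centralizer_iff_commute.1
      (mem_centralizer_of_forall_conj hcover (mem_top y) hy) x hxA)
  exact h.isPRegular_mul_of_commute hx.isPElement (h.centralizerPPart_eq hx) ha hb
    (hcomm ha) (hcomm hb)

theorem isPRegular_mul_or_exists_ne (h : IsPIndexExtremalStar p q G) (hP : IsSylowIn p P ⊤) :
    (∀ a b : G, IsPRegular p a → IsPRegular p b → IsPRegular p (a * b)) ∨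
      ∃ A A', IsPRegularCentralizerSylow p q A ∧ A ≤ P ∧ IsPRegularCentralizerSylow p q A' ∧
        A' ≤ P ∧ A' ≠ A := by
  refine or_iff_not_imp_right.2 fun hunique a b ha hb => ?_
  have hex {A : Subgroup G} (hA : IsPRegularCentralizerSylow p q A) :
      ∃ k : G, conj k • A ≤ P := by
    obtain ⟨k, -, hk⟩ := hP.exists_le_conj hA.isPGroup le_top
    exact ⟨k⁻¹, by rwa [map_inv, pointwise_smul_subset_iff, inv_inv]⟩
  by_cases hA : ∃ A, IsPRegularCentralizerSylow p q A ∧ A ≤ P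
  · obtain ⟨A, hA, hAP⟩ := hA
    have heq {A' : Subgroup G} (hA' : IsPRegularCentralizerSylow p q A') (hle : A' ≤ P) :
        A' = A := by
      by_contra hne
      exact hunique ⟨A, A', hA, hAP, hA', hle, hne⟩
    obtain ⟨x, hxA, hx, -⟩ := h.exists_eq_pCentralizer hA
    refine h.isPRegular_mul_of_forall_exists_conj_eq hP hAP (fun g hg => ?_) hxA hx
      (fun A' hA' => ?_) ha hb
    · refine mem_normalizer_iff_conj_smul_eq.2 (heq (hA.conj_smul g) ?_)
      exact (pointwise_smul_le_pointwise_smul_iff.2 hAP).trans_eq (conj_smul_eq_self_of_mem hg)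
    · obtain ⟨k, hk⟩ := hex hA'
      exact ⟨k⁻¹, by rw [← heq (hA'.conj_smul k) hk, map_inv, inv_smul_smul]⟩
  · have hcard : q ≤ Nat.card P := by
      rw [hP.card_eq, card_top]
      exact h.lt.le
    obtain ⟨x, hxP, hx⟩ := h.exists_isNoncentralPElement_mem hP.isPGroup hcard
    refine h.isPRegular_mul_of_forall_exists_conj_eq hP le_rfl le_normalizer hxP hx
      (fun A' hA' => ?_) ha hb
    obtain ⟨k, hk⟩ := hex hA'
    exact absurd ⟨_, hA'.conj_smul k, hk⟩ hA

end IsPIndexExtremalStar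

end RegularCentralizer

section CentralizerModPCenter

variable {G : Type*} [Group G] {p : ℕ} [hp : Fact p.Prime] {g h x : G}

/-- The elements of `G` that commute with `x` modulo `pCenter p G`. -/
def centralizerModPCenter (p : ℕ) {G : Type*} [Group G] [Fact p.Prime] (x : G) : Subgroup G :=
  (centralizer {(x : G ⧸ pCenter p G)}).comap (QuotientGroup.mk' _)

theorem mem_centralizerModPCenter_iff_commute :
    g ∈ centralizerModPCenter p x ↔ Commute (g : G ⧸ pCenter p G) x :=
  mem_centralizer_singleton_iff_commute

theorem mem_centralizerModPCenter_iff : g ∈ centralizerModPCenter p x ↔ ⁅g, x⁆ ∈ pCenter p G := by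
  rw [mem_centralizerModPCenter_iff_commute, ← commutatorElement_eq_one_iff_commute,
    ← QuotientGroup.eq_one_iff]
  rfl

theorem mem_centralizerModPCenter_comm :
    g ∈ centralizerModPCenter p x ↔ x ∈ centralizerModPCenter p g := by
  rw [mem_centralizerModPCenter_iff, mem_centralizerModPCenter_iff, ← inv_mem_iff,
    commutatorElement_inv]

theorem mem_centralizerModPCenter_of_commute (hgx : Commute g x) :
    g ∈ centralizerModPCenter p x := by
  rw [mem_centralizerModPCenter_iff, commutatorElement_eq_one_iff_commute.2 hgx]
  exact one_mem _

theorem conj_smul_centralizerModPCenter (g x : G) :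
    conj g • centralizerModPCenter p x = centralizerModPCenter p (g * x * g⁻¹) := by
  ext t
  rw [mem_conj_smul_iff, mem_centralizerModPCenter_iff, mem_centralizerModPCenter_iff,
    ← conj_mem_pCenter_iff (g := g), ← conj_apply, map_commutatorElement]
  simp [mul_assoc]

/-- The commutator with `x`, which is multiplicative on the elements that commute with `x`
modulo the central subgroup `pCenter p G`. -/
def commutatorHom (p : ℕ) {G : Type*} [Group G] [Fact p.Prime] (x : G) :
    centralizerModPCenter p x →* pCenter p G where
  toFun g := ⟨⁅(g : G), x⁆, mem_centralizerModPCenter_iff.1 g.2⟩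
  map_one' := Subtype.ext (commutatorElement_one_left x)
  map_mul' a b := by
    have hb := (mem_centralizerModPCenter_iff.1 b.2).2
    refine Subtype.ext ?_
    change ⁅(a * b : G), x⁆ = ⁅(a : G), x⁆ * ⁅(b : G), x⁆
    rw [commutatorElement_mul_left_eq_conj_mul, (hb a).eq, mul_inv_cancel_right,
      (hb ⁅(a : G), x⁆).eq]

theorem commutatorHom_apply_eq_one_iff {g : centralizerModPCenter p x} :
    commutatorHom p x g = 1 ↔ Commute (g : G) x := by
  rw [← commutatorElement_eq_one_iff_commute]
  exact Subtype.ext_iff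

theorem commutatorHom_commute (a b : centralizerModPCenter p x) :
    Commute (commutatorHom p x a) (commutatorHom p x b) :=
  Subtype.ext ((commutatorHom p x b).2.2 _).eq

theorem commute_commutatorElement_of_mem_centralizerModPCenter
    (hg : g ∈ centralizerModPCenter p x) (hh : h ∈ centralizerModPCenter p x) :
    Commute ⁅g, h⁆ x := by
  refine (commutatorHom_apply_eq_one_iff
    (g := ⁅(⟨g, hg⟩ : centralizerModPCenter p x), ⟨h, hh⟩⁆)).1 ?_
  rw [map_commutatorElement]
  exact commutatorElement_eq_one_iff_commute.2 (commutatorHom_commute _ _)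

theorem commutatorElement_pow_right_of_mem_centralizerModPCenter
    (hg : g ∈ centralizerModPCenter p x) (n : ℕ) : ⁅g, x ^ n⁆ = ⁅g, x⁆ ^ n := by
  have hx := mem_centralizerModPCenter_comm.1 hg
  have h := congrArg Subtype.val (map_pow (commutatorHom p g) ⟨x, hx⟩ n)
  rw [← inv_inj, commutatorElement_inv, ← inv_pow, commutatorElement_inv]
  exact h

theorem commute_pow_of_mem_centralizerModPCenter (hg : g ∈ centralizerModPCenter p x)
    (hx : x ^ p ∈ pCenter p G) : Commute (g ^ p) x := by
  refine (commutatorHom_apply_eq_one_iff (g := ⟨g, hg⟩ ^ p)).1 ?_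
  rw [map_pow]
  refine Subtype.ext ?_
  change ⁅g, x⁆ ^ p = 1
  rw [← commutatorElement_pow_right_of_mem_centralizerModPCenter hg,
    commutatorElement_eq_one_iff_commute]
  exact hx.2 g

theorem IsPRegular.commute_of_mem_centralizerModPCenter (hg : IsPRegular p g)
    (hgx : g ∈ centralizerModPCenter p x) : Commute g x :=
  (commutatorHom_apply_eq_one_iff (g := ⟨g, hgx⟩)).1
    (IsPRegular.map_eq_one (isPRegular_coe.1 hg) isPGroup_pCenter _)

end CentralizerModPCenter

section SecondCentral

variable {G : Type*} [Group G] {p q : ℕ} [hp : Fact p.Prime] {a b w x z : G}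
  {H P : Subgroup G}

/-- `w` is an element of the Sylow `p`-subgroup `P` of `G` whose image in `P / pCenter p G` is
a central element of order `p`. -/
structure IsSecondCentral (p : ℕ) {G : Type*} [Group G] [Fact p.Prime] (P : Subgroup G)
    (w : G) : Prop where
  isSylowIn : IsSylowIn p P ⊤
  mem : w ∈ P
  notMem : w ∉ pCenter p G
  pow_prime_mem : w ^ p ∈ pCenter p G
  le : P ≤ centralizerModPCenter p w

theorem IsSecondCentral.isNoncentralPElement (hw : IsSecondCentral p P w) :
    IsNoncentralPElement p w :=
  isNoncentralPElement_of_mem hw.isSylowIn.isPGroup hw.mem hw.notMem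

theorem mem_of_pow_prime_mem_of_pow_mem (hap : a ^ p ∈ H) {n : ℕ} (hn0 : n ≠ 0) (hn : n < p)
    (han : a ^ n ∈ H) : a ∈ H := by
  have hcop : n.gcd p = 1 := Nat.Coprime.symm <|
    hp.out.coprime_iff_not_dvd.2 (Nat.not_dvd_of_pos_of_lt (Nat.pos_of_ne_zero hn0) hn)
  have hbezout : a = (a ^ n) ^ n.gcdA p * (a ^ p) ^ n.gcdB p := by
    rw [← zpow_natCast, ← zpow_natCast, ← zpow_mul, ← zpow_mul, ← zpow_add, ← Nat.gcd_eq_gcd_ab,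
      hcop, Nat.cast_one, zpow_one]
  rw [hbezout]
  exact mul_mem (zpow_mem han _) (zpow_mem hap _)

theorem pow_mul_pow_notMem (hap : a ^ p ∈ H) (ha : a ∉ H) (hbp : b ^ p ∈ H)
    (hb : b ∉ zpowers a ⊔ H) {i j : ℕ} (hi : i < p) (hj : j < p) (hij : i ≠ 0 ∨ j ≠ 0) :
    a ^ i * b ^ j ∉ H := by
  intro hmem
  by_cases hj0 : j = 0
  · rw [hj0, pow_zero, mul_one] at hmem
    exact ha (mem_of_pow_prime_mem_of_pow_mem hap (hij.resolve_right (not_not.2 hj0)) hi hmem)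
  · refine hb (mem_of_pow_prime_mem_of_pow_mem (mem_sup_right hbp) hj0 hj ?_)
    exact (Subgroup.mul_mem_cancel_left _ (mem_sup_left (npow_mem_zpowers a i))).1
      (mem_sup_right hmem)

theorem mem_zpowers_sup_iff [H.Normal] (ha : a ^ p ∈ H) :
    x ∈ zpowers a ⊔ H ↔ ∃ n < p, ∃ z ∈ H, a ^ n * z = x := by
  constructor
  · rw [mem_sup_of_normal_right]
    rintro ⟨b, hb, z, hz, rfl⟩
    obtain ⟨k, rfl⟩ := mem_zpowers_iff.1 hb
    have hp0 : (0 : ℤ) < p := by exact_mod_cast hp.out.pos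
    obtain ⟨n, hn⟩ := Int.eq_ofNat_of_zero_le (Int.emod_nonneg k hp0.ne')
    have hnp := Int.emod_lt_of_pos k hp0
    refine ⟨n, by lia, (a ^ p) ^ (k / p) * z, mul_mem (zpow_mem ha _) hz, ?_⟩
    rw [← mul_assoc, ← zpow_natCast, ← zpow_natCast, ← zpow_mul, ← zpow_add, ← hn,
      Int.emod_add_mul_ediv]
  · rintro ⟨n, -, z, hz, rfl⟩
    exact mul_mem (mem_sup_left (npow_mem_zpowers a n)) (mem_sup_right hz)

theorem card_zpowers_sup_le [Finite G] [H.Normal] (ha : a ^ p ∈ H) :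
    Nat.card (zpowers a ⊔ H : Subgroup G) ≤ p * Nat.card H := by
  let f : Fin p × H → G := fun x => a ^ (x.1 : ℕ) * x.2
  have hf : ((zpowers a ⊔ H : Subgroup G) : Set G) ⊆ Set.range f := fun x hx => by
    obtain ⟨n, hn, z, hz, rfl⟩ := (mem_zpowers_sup_iff ha).1 hx
    exact ⟨(⟨n, hn⟩, ⟨z, hz⟩), rfl⟩
  calc Nat.card (zpowers a ⊔ H : Subgroup G) ≤ Nat.card (Set.range f) :=
        Nat.card_mono (Set.toFinite _) hf
    _ ≤ Nat.card (Fin p × H) := Finite.card_range_le f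
    _ = p * Nat.card H := by rw [Nat.card_prod, Nat.card_fin]

theorem pCentralizer_mul_of_mem_pCenter (hz : z ∈ pCenter p G) (x : G) :
    pCentralizer p (z * x) = pCentralizer p x := by
  refine congrArg Subgroup.closure (Set.ext fun t => and_congr Iff.rfl ⟨fun ht => ?_, ?_⟩)
  · simpa using (hz.2 t).inv_right.mul_right ht
  · exact (hz.2 t).mul_right

variable [Finite G]

namespace IsPIndexExtremalStar

theorem pCenter_le_pCentralizer (h : IsPIndexExtremalStar p q G)
    (hx : IsNoncentralPElement p x) : pCenter p G ≤ pCentralizer p x :=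
  (h.isSylowIn_pCentralizer hx).pCenter_le (pCenter_le_centralizer _)

theorem exists_isSecondCentral (h : IsPIndexExtremalStar p q G) (hP : IsSylowIn p P ⊤) :
    ∃ w, IsSecondCentral p P w := by
  let Z := (pCenter p G).subgroupOf P
  have hmk (g : P) : (g : P ⧸ Z) = 1 ↔ (g : G) ∈ pCenter p G := QuotientGroup.eq_one_iff g
  have hQ : IsPGroup p (P ⧸ Z) := hP.isPGroup.to_quotient _
  have hnontrivial : Nontrivial (P ⧸ Z) := by
    have hcard : q ≤ Nat.card P := by
      rw [hP.card_eq, card_top]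
      exact h.lt.le
    obtain ⟨x, hxP, hx⟩ := h.exists_isNoncentralPElement_mem hP.isPGroup hcard
    exact ⟨⟨((⟨x, hxP⟩ : P) : P ⧸ Z), 1, fun h1 => hx.notMem ((hmk _).1 h1)⟩⟩
  have hcenter := hQ.center_nontrivial
  obtain ⟨n, hn, hcard⟩ := (hQ.to_subgroup (center (P ⧸ Z))).nontrivial_iff_card.1 hcenter
  obtain ⟨c, hc⟩ := exists_prime_orderOf_dvd_card' (G := center (P ⧸ Z)) p
    (hcard ▸ dvd_pow_self p hn.ne')
  obtain ⟨w, hwc⟩ := QuotientGroup.mk_surjective (c : P ⧸ Z)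
  refine ⟨w, hP, w.2, fun hwZ => ?_, (hmk (w ^ p)).1 ?_, fun g hg => ?_⟩
  · have hc1 : c = 1 := Subtype.ext (hwc.symm.trans ((hmk w).2 hwZ))
    rw [hc1, orderOf_one] at hc
    exact hp.out.ne_one hc.symm
  · rw [QuotientGroup.mk_pow, hwc, ← coe_pow, orderOf_dvd_iff_pow_eq_one.1 hc.dvd]
    rfl
  · rw [mem_centralizerModPCenter_iff]
    refine (hmk ⁅(⟨g, hg⟩ : P), w⁆).1 ?_
    have hcomm := mem_center_iff.1 c.2 ((⟨g, hg⟩ : P) : P ⧸ Z)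
    rw [← hwc] at hcomm
    exact commutatorElement_eq_one_iff_commute.2 hcomm

end IsPIndexExtremalStar

omit [Finite G] in
theorem centralizerModPCenter_le_normalizer (x : G) :
    centralizerModPCenter p x ≤ normalizer (pCentralizer p x : Set G) := fun g hg => by
  rw [mem_normalizer_iff_conj_smul_eq, conj_smul_pCentralizer, ← conj_apply,
    conj_eq_commutatorElement_mul,
    pCentralizer_mul_of_mem_pCenter (mem_centralizerModPCenter_iff.1 hg)]

end SecondCentral

section CardEq

variable {G : Type*} [Group G] [Finite G] {p q : ℕ} [hp : Fact p.Prime] {a b e t w x y : G}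
  {A A₁ A₂ P : Subgroup G}

namespace IsSecondCentral

omit [Finite G] in
theorem le_normalizer_pCentralizer (hw : IsSecondCentral p P w) :
    P ≤ normalizer (pCentralizer p w : Set G) :=
  hw.le.trans (centralizerModPCenter_le_normalizer w)

theorem commutatorElement_mem_of_mem_centralizerModPCenter (hw : IsSecondCentral p P w)
    (h : IsPIndexExtremalStar p q G) (ha : a ∈ centralizerModPCenter p w)
    (hb : b ∈ centralizerModPCenter p w) (hab : ⁅a, b⁆ ∈ P) : ⁅a, b⁆ ∈ pCentralizer p w :=
  (h.mem_pCentralizer_iff hw.isNoncentralPElement).2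
    ⟨isPElement_of_mem hw.isSylowIn.isPGroup hab,
      commute_commutatorElement_of_mem_centralizerModPCenter ha hb⟩

theorem commutatorElement_mem (hw : IsSecondCentral p P w) (h : IsPIndexExtremalStar p q G)
    (ha : a ∈ P) (hb : b ∈ P) : ⁅a, b⁆ ∈ pCentralizer p w :=
  hw.commutatorElement_mem_of_mem_centralizerModPCenter h (hw.le ha) (hw.le hb)
    (commutator_le_self P (commutator_mem_commutator ha hb))

theorem pow_mem_pCentralizer (hw : IsSecondCentral p P w) (h : IsPIndexExtremalStar p q G)
    (ha : a ∈ P) : a ^ p ∈ pCentralizer p w :=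
  (h.mem_pCentralizer_iff hw.isNoncentralPElement).2
    ⟨isPElement_of_mem hw.isSylowIn.isPGroup (pow_mem ha p),
      commute_pow_of_mem_centralizerModPCenter (hw.le ha) hw.pow_prime_mem⟩

theorem eq_pCentralizer_of_mem (hw : IsSecondCentral p P w) (h : IsPIndexExtremalStar p q G)
    (hA : IsPRegularCentralizerSylow p q A) (hAP : A ≤ P) (haA : a ∈ A)
    (haW : a ∈ pCentralizer p w) (haZ : a ∉ pCenter p G) : A = pCentralizer p w := by
  have ha := isNoncentralPElement_of_mem hA.isPGroup haA haZ
  obtain ⟨y, hy, hs, hAy⟩ := hA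
  have hya : Commute y a := (mem_centralizer_singleton_iff_commute.1 (hAy.le haA)).symm
  have hwa : w ∈ pCentralizer p a := (h.mem_pCentralizer_iff ha).2
    ⟨hw.isNoncentralPElement.isPElement,
      ((h.mem_pCentralizer_iff hw.isNoncentralPElement).1 haW).2.symm⟩
  have hyw : Commute y w :=
    (mem_centralizer_iff_commute.1 (h.mem_centralizer_pCentralizer ha hy hya) w hwa)
  have hWy := h.isSylowIn_pCentralizer_of_commute hw.isNoncentralPElement hy hs hyw
  exact hAy.eq_of_le hWy.isPGroup hWy.le
    (hWy.le_of_le_normalizer hAy.isPGroup hAy.le (hAP.trans hw.le_normalizer_pCentralizer))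

theorem exists_le_normalizer (hw : IsSecondCentral p P w)
    (hA₁ : IsPRegularCentralizerSylow p q A₁) (hP₁ : A₁ ≤ P)
    (hA₂ : IsPRegularCentralizerSylow p q A₂) (hP₂ : A₂ ≤ P) (hne : A₂ ≠ A₁) :
    ∃ B₁ B₂ : Subgroup G, IsPRegularCentralizerSylow p q B₁ ∧ IsPRegularCentralizerSylow p q B₂ ∧
      B₂ ≤ P ∧ B₂ ≠ B₁ ∧ B₂ ≤ normalizer (B₁ : Set G) ∧ B₂ ≠ pCentralizer p w := by
  by_cases hPN : P ≤ normalizer (A₁ : Set G)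
  · obtain hW | hW := eq_or_ne A₂ (pCentralizer p w)
    · exact ⟨A₂, A₁, hA₂, hA₁, hP₁, hne.symm, hP₁.trans (hW ▸ hw.le_normalizer_pCentralizer),
        hW ▸ hne.symm⟩
    · exact ⟨A₁, A₂, hA₁, hA₂, hP₂, hne, hP₂.trans hPN, hW⟩
  · obtain ⟨s, hsP, hsD, hsN⟩ :=
      exists_mem_normalizer_of_lt hw.isSylowIn.isPGroup (inf_lt_left.2 hPN)
    have hs : s ∉ normalizer (A₁ : Set G) := fun hsA => hsD ⟨hsP, hsA⟩
    have hle : conj s • A₁ ≤ P ⊓ normalizer (A₁ : Set G) := by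
      rw [← mem_normalizer_iff_conj_smul_eq.1 hsN]
      exact pointwise_smul_le_pointwise_smul_iff.2 (le_inf hP₁ le_normalizer)
    refine ⟨A₁, conj s • A₁, hA₁, hA₁.conj_smul s, hle.trans inf_le_left,
      fun hfix => hs (mem_normalizer_iff_conj_smul_eq.2 hfix), hle.trans inf_le_right,
      fun hW => hs ?_⟩
    have hA₁W : A₁ = pCentralizer p w := by
      rw [← inv_smul_smul (conj s) A₁, hW, ← map_inv]
      exact mem_normalizer_iff_conj_smul_eq.1 (inv_mem (hw.le_normalizer_pCentralizer hsP))
    exact hA₁W ▸ hw.le_normalizer_pCentralizer hsP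

end IsSecondCentral

namespace IsPIndexExtremalStar

theorem mem_centralizer_pCentralizer_of_mem (h : IsPIndexExtremalStar p q G)
    (ht : IsNoncentralPElement p t) (het : e ∈ pCentralizer p t) (heZ : e ∉ pCenter p G)
    (hy : IsPRegular p y) (hye : Commute y e) : y ∈ centralizer (pCentralizer p t : Set G) := by
  have he := isNoncentralPElement_of_mem (h.isPGroup_pCentralizer ht) het heZ
  have hte : t ∈ pCentralizer p e := (h.mem_pCentralizer_iff he).2
    ⟨ht.isPElement, ((h.mem_pCentralizer_iff ht).1 het).2.symm⟩
  refine h.mem_centralizer_pCentralizer ht hy ?_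
  exact mem_centralizer_iff_commute.1 (h.mem_centralizer_pCentralizer he hy hye) t hte

theorem exists_mem_iff_isPRegular_and_commute (h : IsPIndexExtremalStar p q G)
    (hx : IsNoncentralPElement p x) :
    ∃ K : Subgroup G, ∀ y, y ∈ K ↔ IsPRegular p y ∧ Commute y x :=
  ⟨{ carrier := {y | IsPRegular p y ∧ Commute y x}
     mul_mem' := fun ha hb =>
      ⟨h.isPRegular_mul_of_commute hx.isPElement (h.centralizerPPart_eq hx) ha.1 hb.1 ha.2 hb.2,
        ha.2.mul_left hb.2⟩
     one_mem' := ⟨.one, Commute.one_left x⟩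
     inv_mem' := fun ha => ⟨ha.1.inv, ha.2.inv_left⟩ }, fun _ => Iff.rfl⟩

theorem mem_centralizer_of_le_normalizer (h : IsPIndexExtremalStar p q G)
    (hx : IsNoncentralPElement p x) (hA : IsPRegularCentralizerSylow p q A)
    (hAx : A ≤ normalizer (pCentralizer p x : Set G))
    (hpow : ∀ a ∈ A, a ^ p ∈ pCenter p G) (hcomm : ⁅A, A⁆ ≤ pCenter p G)
    (hcard : p * Nat.card (pCenter p G) < q) (hy : IsPRegular p y) (hyx : Commute y x) :
    y ∈ centralizer (A : Set G) := by
  obtain ⟨K, hK⟩ := h.exists_mem_iff_isPRegular_and_commute hx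
  obtain ⟨t, htA, ht, hAt⟩ := h.exists_eq_pCentralizer hA
  obtain ⟨b, hbA, hb⟩ : ∃ b ∈ A, b ∉ zpowers t ⊔ pCenter p G := by
    refine SetLike.not_le_iff_exists.1 fun hle => hcard.not_ge ?_
    rw [← hA.card_eq]
    exact (card_le_of_le hle).trans (card_zpowers_sup_le (hpow t htA))
  have hAK : A ≤ normalizer (K : Set G) := fun s hs =>
    mem_normalizer_of_forall_conj_mem fun k hk => by
      obtain ⟨hkreg, hkx⟩ := (hK k).1 hk
      have hsx := inv_conj_mem_of_mem_normalizer (hAx hs) (h.mem_pCentralizer_self hx)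
      have hk' := mem_centralizer_iff_commute.1 (h.mem_centralizer_pCentralizer hx hkreg hkx) _ hsx
      exact (hK _).2 ⟨hkreg.conj s, by simpa [mul_assoc] using (Commute.conj_iff s).2 hk'⟩
  refine le_centralizer_of_inf_centralizer_le (K := K) (fun k hk => ((hK k).1 hk).1) hA.isPGroup
    hAK (fun a ha => pCenter_le_centralizer _ (hpow a ha))
    (hcomm.trans (pCenter_le_centralizer _)) htA hbA (fun i hi j hj hij k hk => ?_)
    ((hK y).2 ⟨hy, hyx⟩)
  have heA : t ^ i * b ^ j ∈ A := mul_mem (pow_mem htA i) (pow_mem hbA j)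
  have heZ := pow_mul_pow_notMem (hpow t htA) ht.notMem (hpow b hbA) hb hi hj hij
  rw [hAt] at heA ⊢
  exact h.mem_centralizer_pCentralizer_of_mem ht heA heZ ((hK k).1 hk.1).1
    (mem_centralizer_singleton_iff_commute.1 hk.2)

theorem eq_prime_mul_card_pCenter (h : IsPIndexExtremalStar p q G) (hw : IsSecondCentral p P w)
    (hA₁ : IsPRegularCentralizerSylow p q A₁) (hP₁ : A₁ ≤ P)
    (hA₂ : IsPRegularCentralizerSylow p q A₂) (hP₂ : A₂ ≤ P) (hne : A₂ ≠ A₁) :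
    q = p * Nat.card (pCenter p G) := by
  obtain ⟨B₁, B₂, hB₁, hB₂, hBP, hBne, hBN, hBW⟩ := hw.exists_le_normalizer hA₁ hP₁ hA₂ hP₂ hne
  have mem_pCenter {a : G} (haB : a ∈ B₂) (haW : a ∈ pCentralizer p w) : a ∈ pCenter p G :=
    by_contra fun haZ => hBW (hw.eq_pCentralizer_of_mem h hB₂ hBP haB haW haZ)
  refine (h.prime_mul_card_pCenter_le.antisymm (not_lt.1 fun hlt => hBne ?_)).symm
  obtain ⟨t, htB, ht, hBt⟩ := h.exists_eq_pCentralizer hB₁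
  have hcard : Nat.card B₁ = Nat.card B₂ := hB₁.card_eq.trans hB₂.card_eq.symm
  obtain ⟨y, hy, -, hBy⟩ := hB₁
  have hyB₂ : y ∈ centralizer (B₂ : Set G) := by
    refine h.mem_centralizer_of_le_normalizer ht hB₂ (hBt ▸ hBN) (fun a ha => ?_)
      (commutator_le.2 fun a ha b hb => ?_) hlt hy
      (mem_centralizer_singleton_iff_commute.1 (hBy.le htB)).symm
    · exact mem_pCenter (pow_mem ha p) (hw.pow_mem_pCentralizer h (hBP ha))
    · exact mem_pCenter (commutator_le_self _ (commutator_mem_commutator ha hb))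
        (hw.commutatorElement_mem h (hBP ha) (hBP hb))
  have hle := hBy.le_of_le_normalizer hB₂.isPGroup (le_centralizer_singleton_iff.2 hyB₂) hBN
  exact eq_of_le_of_card_ge hle hcard.le

end IsPIndexExtremalStar

end CardEq

section OrbitCounting

variable {G : Type*} [Group G] [Finite G] {M : Subgroup G} {m n : ℕ}

omit [Finite G] in
theorem ncard_image_conj_eq_relIndex (M : Subgroup G) (b : G) :
    ((fun g => g * b * g⁻¹) '' (M : Set G)).ncard = (centralizer {b}).relIndex M := by
  let _ : MulAction M G := MulAction.compHom G (conj.comp M.subtype)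
  have horbit : MulAction.orbit M b = (fun g => g * b * g⁻¹) '' (M : Set G) :=
    Set.ext fun x => ⟨fun ⟨g, hg⟩ => ⟨g, g.2, hg⟩, fun ⟨g, hgM, hg⟩ => ⟨⟨g, hgM⟩, hg⟩⟩
  have hstabilizer : MulAction.stabilizer M b = (centralizer {b}).subgroupOf M := by
    ext g
    rw [mem_subgroupOf, mem_centralizer_singleton_iff_commute, MulAction.mem_stabilizer_iff]
    exact mul_inv_eq_iff_eq_mul
  rw [← horbit, ← MulAction.index_stabilizer, hstabilizer, relIndex]

theorem exists_subset_forall_exists_conj_mem_ncard_mul_le {B : Set G}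
    (hB : ∀ b ∈ B, ∀ g ∈ M, g * b * g⁻¹ ∈ B)
    (hm : ∀ b ∈ B, m ≤ n * (centralizer {b}).relIndex M) :
    ∃ S ⊆ B, (∀ b ∈ B, ∃ g ∈ M, g * b * g⁻¹ ∈ S) ∧ S.ncard * m ≤ n * B.ncard := by
  induction hk : B.ncard using Nat.strong_induction_on generalizing B with
  | _ k ih =>
  obtain rfl | ⟨b, hb⟩ := B.eq_empty_or_nonempty
  · exact ⟨∅, subset_rfl, by simp, by simp⟩
  let O := (fun g => g * b * g⁻¹) '' (M : Set G)
  have hbO : b ∈ O := ⟨1, one_mem M, by simp⟩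
  have hOB : O ⊆ B := Set.image_subset_iff.2 fun g hg => hB b hb g hg
  have hcard : (B \ O).ncard + O.ncard = k := (Set.ncard_sdiff_add_ncard_of_subset hOB).trans hk
  have hdiff : ∀ c ∈ B \ O, ∀ g ∈ M, g * c * g⁻¹ ∈ B \ O := by
    rintro c ⟨hcB, hcO⟩ g hg
    refine ⟨hB c hcB g hg, fun ⟨k, hk, hkc⟩ => hcO ⟨g⁻¹ * k, mul_mem (inv_mem hg) hk, ?_⟩⟩
    have hkc' : k * b * k⁻¹ = g * c * g⁻¹ := hkc
    calc g⁻¹ * k * b * (g⁻¹ * k)⁻¹ = g⁻¹ * (k * b * k⁻¹) * g := by group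
      _ = c := by rw [hkc']; group
  have hOpos : 0 < O.ncard := (Set.ncard_pos (Set.toFinite O)).2 ⟨b, hbO⟩
  obtain ⟨S, hSB, hS, hle⟩ := ih _ (by lia) hdiff (fun c hc => hm c hc.1) rfl
  refine ⟨insert b S, Set.insert_subset hb (hSB.trans Set.sdiff_subset), fun c hc => ?_, ?_⟩
  · by_cases hcO : c ∈ O
    · obtain ⟨g, hg, rfl⟩ := hcO
      exact ⟨g⁻¹, inv_mem hg, Or.inl (by group)⟩
    · obtain ⟨g, hg, hgS⟩ := hS c ⟨hc, hcO⟩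
      exact ⟨g, hg, Or.inr hgS⟩
  · calc (insert b S).ncard * m ≤ S.ncard * m + m :=
          (Nat.mul_le_mul_right m (Set.ncard_insert_le b S)).trans_eq (Nat.succ_mul _ m)
      _ ≤ n * (B \ O).ncard + n * O.ncard :=
          Nat.add_le_add hle (ncard_image_conj_eq_relIndex M b ▸ hm b hb)
      _ = n * k := by rw [← mul_add, hcard]

end OrbitCounting

theorem card_mul_relIndex {G : Type*} [Group G] {H K : Subgroup G} (h : H ≤ K) :
    Nat.card H * H.relIndex K = Nat.card K := by
  rw [← relIndex_bot_left, ← relIndex_bot_left, relIndex_mul_relIndex ⊥ H K bot_le h]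

section SylowNormalizer

variable {G : Type*} [Group G] [Finite G] {p q : ℕ} [hp : Fact p.Prime] {x : G}
  {P : Subgroup G}

namespace IsPIndexExtremalStar

theorem pCentralizer_eq_zpowers_sup (h : IsPIndexExtremalStar p q G)
    (hq : q = p * Nat.card (pCenter p G)) (hx : IsNoncentralPElement p x) :
    pCentralizer p x = zpowers x ⊔ pCenter p G := by
  have hle : zpowers x ⊔ pCenter p G ≤ pCentralizer p x :=
    sup_le (zpowers_le.2 (h.mem_pCentralizer_self hx)) (h.pCenter_le_pCentralizer hx)
  refine (eq_of_le_of_card_ge hle ?_).symm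
  have hlt : Nat.card (pCenter p G) < Nat.card (zpowers x ⊔ pCenter p G : Subgroup G) := by
    refine (card_le_of_le le_sup_right).lt_of_ne fun heq => hx.notMem ?_
    rw [eq_of_le_of_card_ge (le_sup_right : pCenter p G ≤ zpowers x ⊔ pCenter p G) heq.ge]
    exact mem_sup_left (mem_zpowers x)
  rw [h.card_pCentralizer hx, hq, ← ordProj_card_eq_of_isPGroup isPGroup_pCenter,
    ← ordProj_card_eq_of_isPGroup ((h.isPGroup_pCentralizer hx).to_le hle)] at *
  exact mul_ordProj_le_of_lt hlt

theorem pow_prime_mem_pCenter (h : IsPIndexExtremalStar p q G)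
    (hq : q = p * Nat.card (pCenter p G)) (hx : IsPElement p x) : x ^ p ∈ pCenter p G := by
  by_cases hxZ : x ∈ pCenter p G
  · exact pow_mem hxZ p
  have hnc : IsNoncentralPElement p x := ⟨hx, hxZ⟩
  have hindex : (pCenter p G).relIndex (pCentralizer p x) = p := by
    refine Nat.eq_of_mul_eq_mul_right (Nat.card_pos (α := pCenter p G)) ?_
    rw [← hq, ← h.card_pCentralizer hnc, mul_comm]
    exact card_mul_relIndex (h.pCenter_le_pCentralizer hnc)
  have hpow := ((pCenter p G).subgroupOf (pCentralizer p x)).pow_index_mem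
    ⟨x, h.mem_pCentralizer_self hnc⟩
  rwa [← relIndex, hindex] at hpow

theorem inf_normalizer_le_sup_centralizer (h : IsPIndexExtremalStar p q G)
    (hP : IsSylowIn p P ⊤) (hxP : x ∈ P) (hxZ : x ∉ pCenter p G) :
    centralizer {x} ⊓ normalizer (P : Set G) ≤ P ⊔ centralizer (P : Set G) := by
  rintro g ⟨hgx, hgN⟩
  obtain ⟨a, b, ha, hb, hab, rfl⟩ := exists_isPElement_mul_isPRegular_eq p g
  have haN : a ∈ normalizer (P : Set G) := zpowers_le.2 hgN (ha.mem_zpowers_mul hb hab)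
  have hbN := (Subgroup.mul_mem_cancel_left _ haN).1 hgN
  have hxb : Commute x b := ha.commute_right_of_commute_mul hb hab
    (mem_centralizer_singleton_iff_commute.1 hgx).symm
  have hPN := hP.of_le le_normalizer le_top
  refine mul_mem (mem_sup_left (hPN.mem_of_le_normalizer le_rfl ha haN)) (mem_sup_right ?_)
  exact h.mem_centralizer_of_commute hP.isPGroup hb hbN hxP
    (isNoncentralPElement_of_mem hP.isPGroup hxP hxZ) hxb

theorem card_le_mul_relIndex (h : IsPIndexExtremalStar p q G) (hP : IsSylowIn p P ⊤)
    (hxP : x ∈ P) (hxZ : x ∉ pCenter p G) : Nat.card P ≤ q * (centralizer {x}).relIndex P := by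
  have hx := isNoncentralPElement_of_mem hP.isPGroup hxP hxZ
  have hle : centralizer {x} ⊓ P ≤ pCentralizer p x := fun t ht => (h.mem_pCentralizer_iff hx).2
    ⟨isPElement_of_mem hP.isPGroup ht.2, mem_centralizer_singleton_iff_commute.1 ht.1⟩
  rw [← h.card_pCentralizer hx, ← inf_relIndex_right,
    ← card_mul_relIndex (inf_le_right : centralizer {x} ⊓ P ≤ P)]
  exact Nat.mul_le_mul_right _ (card_le_of_le hle)

theorem two_mul_card_le_mul_relIndex_normalizer (h : IsPIndexExtremalStar p q G)
    (hP : IsSylowIn p P ⊤) (hN : ¬normalizer (P : Set G) ≤ P ⊔ centralizer (P : Set G))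
    (hxP : x ∈ P) (hxZ : x ∉ pCenter p G) :
    2 * Nat.card P ≤ q * (centralizer {x}).relIndex (normalizer (P : Set G)) := by
  let N := normalizer (P : Set G)
  let L := P ⊔ centralizer (P : Set G)
  have hLN : L ≤ N := sup_le le_normalizer (centralizer_le_normalizer _)
  have htwo : 2 ≤ L.relIndex N :=
    (Nat.two_le_iff _).2 ⟨index_ne_zero_of_finite, relIndex_eq_one.not.2 hN⟩
  calc 2 * Nat.card P ≤ L.relIndex N * (q * (centralizer {x}).relIndex P) :=
        Nat.mul_le_mul htwo (h.card_le_mul_relIndex hP hxP hxZ)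
    _ = q * ((centralizer {x} ⊓ N).relIndex P * L.relIndex N) := by
        rw [← inf_relIndex_right (centralizer {x} ⊓ N), inf_assoc, inf_eq_right.2 le_normalizer,
          inf_relIndex_right]
        ring
    _ ≤ q * ((centralizer {x} ⊓ N).relIndex L * L.relIndex N) := by
        gcongr
        exact relIndex_le_of_le_right le_sup_left index_ne_zero_of_finite
    _ = q * (centralizer {x}).relIndex N := by
        rw [relIndex_mul_relIndex _ _ _ (h.inf_normalizer_le_sup_centralizer hP hxP hxZ) hLN,
          inf_relIndex_right]

theorem le_ncard_isPElement_and_commute (h : IsPIndexExtremalStar p q G) (g : G) :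
    q ≤ {b | IsPElement p b ∧ Commute g b}.ncard := by
  obtain ⟨T, hT⟩ := exists_isSylowIn p (centralizer {g})
  calc q ≤ Nat.card T := (h.le_centralizerPPart g).trans_eq hT.card_eq.symm
    _ ≤ {b | IsPElement p b ∧ Commute g b}.ncard := Set.ncard_le_ncard fun t ht =>
        ⟨isPElement_of_mem hT.isPGroup ht,
          (mem_centralizer_singleton_iff_commute.1 (hT.le ht)).symm⟩

/- Otherwise every noncentral element of `P` has at least `2 * |P| / q` conjugates under the
normalizer of `P`, so that the `p`-elements of `G` fall into at most `q / 2 + |pCenter p G| ≤ q`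
classes. As every element of `G` commutes with at least `q` of them, all `p`-elements would be
central by the orbit-counting formula. -/
theorem normalizer_le_sup_centralizer (h : IsPIndexExtremalStar p q G) (hP : IsSylowIn p P ⊤) :
    normalizer (P : Set G) ≤ P ⊔ centralizer (P : Set G) := by
  by_contra hN
  obtain ⟨S, -, hS, hcard⟩ := exists_subset_forall_exists_conj_mem_ncard_mul_le
    (M := normalizer (P : Set G)) (B := (P : Set G) \ pCenter p G)
    (fun b hb g hg => ⟨conj_mem_of_mem_normalizer hg hb.1, conj_mem_pCenter_iff.not.2 hb.2⟩)
    (fun b hb => h.two_mul_card_le_mul_relIndex_normalizer hP hN hb.1 hb.2)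
  have hS_card : 2 * S.ncard ≤ q := by
    refine Nat.le_of_mul_le_mul_right ?_ (Nat.card_pos (α := P))
    calc 2 * S.ncard * Nat.card P = S.ncard * (2 * Nat.card P) := by ring
      _ ≤ q * ((P : Set G) \ pCenter p G).ncard := hcard
      _ ≤ q * Nat.card P := Nat.mul_le_mul_left q (Set.ncard_le_ncard Set.sdiff_subset)
  have hZ_card : 2 * Nat.card (pCenter p G) ≤ q :=
    (Nat.mul_le_mul_right _ hp.out.two_le).trans h.prime_mul_card_pCenter_le
  have hSZ_card : (S ∪ pCenter p G).ncard ≤ q := by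
    have hle := Set.ncard_union_le S (pCenter p G : Set G)
    have hZ : (pCenter p G : Set G).ncard = Nat.card (pCenter p G) := rfl
    lia
  obtain ⟨x, hx, hxq⟩ := h.exists_eq
  refine (h.isNoncentralPElement_of_eq hx hxq).notMem ⟨hx, fun g => ?_⟩
  refine commute_of_ncard_le_ncard_commute (B := {b | IsPElement p b}) (S := S ∪ pCenter p G)
    (fun b hb g => hb.conj g) (fun b hb => ?_)
    (fun g => hSZ_card.trans (h.le_ncard_isPElement_and_commute g)) hx g
  obtain ⟨k, -, hk⟩ := hP.exists_mem_conj hb (mem_top b)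
  rw [mem_conj_smul_iff] at hk
  by_cases hbZ : b ∈ pCenter p G
  · exact ⟨1, Or.inr (by simpa using hbZ)⟩
  · obtain ⟨g, -, hg⟩ := hS (k⁻¹ * b * k)
      ⟨hk, fun hmem => hbZ (conj_mem_pCenter_iff.1 (by rwa [inv_inv] : k⁻¹ * b * k⁻¹⁻¹ ∈ _))⟩
    refine ⟨g * k⁻¹, Or.inl ?_⟩
    rwa [show g * k⁻¹ * b * (g * k⁻¹)⁻¹ = g * (k⁻¹ * b * k) * g⁻¹ by group]

end IsPIndexExtremalStar

end SylowNormalizer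

section Fusion

theorem commute_of_mul_self_eq_one {H : Type*} [Group H] {a b : H} (ha : a * a = 1)
    (hb : b * b = 1) (hab : a * b * (a * b) = 1) : Commute a b := by
  rw [Commute, SemiconjBy, ← inv_eq_of_mul_eq_one_left hab, mul_inv_rev,
    inv_eq_of_mul_eq_one_left ha, inv_eq_of_mul_eq_one_left hb]

theorem commutatorElement_pow_left_of_commute {H : Type*} [Group H] {a b : H}
    (hab : Commute a ⁅a, b⁆) (n : ℕ) : ⁅a ^ n, b⁆ = ⁅a, b⁆ ^ n := by
  induction n with
  | zero => simp
  | succ n ih =>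
    rw [pow_succ', commutatorElement_mul_left_eq_conj_mul, ih, (hab.pow_right n).eq,
      mul_inv_cancel_right, pow_succ]

/- On the span of `a` and `b`, the elements `x` and `y` act as opposite transvections of `SL₂`, and
the square of the Weyl element `x * y⁻¹ * x` acts as `-1`. -/
theorem exists_conj_eq_inv_of_commutatorElement_eq {H : Type*} [Group H] {a b x y : H}
    (hab : Commute a b) (hxa : Commute x a) (hxb : ⁅x, b⁆ = a) (hyb : Commute y b)
    (hya : ⁅y, a⁆ = b) : ∃ t, t * a * t⁻¹ = a⁻¹ := by
  have conj_xa : conj x a = a := mul_inv_eq_iff_eq_mul.2 hxa.eq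
  have conj_xb : conj x b = a * b := by rw [conj_eq_commutatorElement_mul, hxb]
  have conj_yb : (conj y)⁻¹ b = b := by rw [← map_inv, conj_apply, hyb.inv_left.eq]; group
  have conj_ya : (conj y)⁻¹ a = b⁻¹ * a := by
    rw [inv_apply, MulEquiv.symm_apply_eq, map_mul, map_inv,
      conj_eq_commutatorElement_mul, conj_eq_commutatorElement_mul, hya,
      commutatorElement_eq_one_iff_commute.2 hyb]
    group
  have weyl_a : conj (x * y⁻¹ * x) a = b⁻¹ := by
    rw [map_mul, map_mul, map_inv, mul_apply, mul_apply, conj_xa, conj_ya, map_mul, map_inv,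
      conj_xa, conj_xb, mul_inv_rev, inv_mul_cancel_right]
  have weyl_b : conj (x * y⁻¹ * x) b = a := by
    rw [map_mul, map_mul, map_inv, mul_apply, mul_apply, conj_xb, map_mul, conj_ya, conj_yb,
      mul_assoc, hab.eq, inv_mul_cancel_left, conj_xa]
  refine ⟨x * y⁻¹ * x * (x * y⁻¹ * x), ?_⟩
  rw [← conj_apply, map_mul, mul_apply, weyl_a, map_inv, weyl_b]

variable {G : Type*} [Group G] [Finite G] {p q : ℕ} [hp : Fact p.Prime] {c g v w x : G}
  {H P : Subgroup G}

theorem IsSylowIn.exists_mul_mem_normalizer (hP : IsSylowIn p P H) (hg : conj g • P ≤ H) :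
    ∃ k ∈ H, k * g ∈ normalizer (P : Set G) := by
  obtain ⟨k, hk, hle⟩ := hP.exists_le_conj ((hP.conj_smul g).isPGroup) hg
  refine ⟨k⁻¹, inv_mem hk, mem_normalizer_of_forall_conj_mem fun x hx => ?_⟩
  have hmem := mem_conj_smul_iff.1 (hle (conj_mem_conj_smul_iff.2 hx))
  simpa [mul_assoc] using hmem

namespace IsPIndexExtremalStar

theorem pCentralizer_eq_of_mem (h : IsPIndexExtremalStar p q G)
    (hq : q = p * Nat.card (pCenter p G)) (hx : IsNoncentralPElement p x)
    (hc : c ∈ pCentralizer p x) (hcZ : c ∉ pCenter p G) : pCentralizer p c = pCentralizer p x := by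
  have hnc := isNoncentralPElement_of_mem (h.isPGroup_pCentralizer hx) hc hcZ
  have hle : pCentralizer p c ≤ pCentralizer p x := by
    rw [h.pCentralizer_eq_zpowers_sup hq hnc]
    exact sup_le (zpowers_le.2 hc) (h.pCenter_le_pCentralizer hx)
  exact eq_of_le_of_card_ge hle (by rw [h.card_pCentralizer hx, h.card_pCentralizer hnc])

theorem mem_normalizer_pCentralizer_of_conj_mem (h : IsPIndexExtremalStar p q G)
    (hq : q = p * Nat.card (pCenter p G)) (hx : IsNoncentralPElement p x)
    (hg : g * x * g⁻¹ ∈ pCentralizer p x) : g ∈ normalizer (pCentralizer p x : Set G) := by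
  rw [mem_normalizer_iff_conj_smul_eq, conj_smul_pCentralizer]
  exact h.pCentralizer_eq_of_mem hq hx hg (hx.conj g).notMem

theorem pCentralizer_le_centralizerModPCenter (h : IsPIndexExtremalStar p q G)
    (hq : q = p * Nat.card (pCenter p G)) (hx : IsNoncentralPElement p x)
    (hg : g ∈ centralizerModPCenter p x) : pCentralizer p x ≤ centralizerModPCenter p g := by
  rw [h.pCentralizer_eq_zpowers_sup hq hx]
  exact sup_le (zpowers_le.2 (mem_centralizerModPCenter_comm.1 hg)) fun z hz =>
    mem_centralizerModPCenter_of_commute (hz.2 g).symm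

end IsPIndexExtremalStar

namespace IsSecondCentral

theorem pCenter_le (hw : IsSecondCentral p P w) : pCenter p G ≤ P :=
  hw.isSylowIn.pCenter_le le_top

theorem isSylowIn_centralizerModPCenter (hw : IsSecondCentral p P w) :
    IsSylowIn p P (centralizerModPCenter p w) :=
  hw.isSylowIn.of_le hw.le le_top

theorem normalizer_le (hw : IsSecondCentral p P w) (h : IsPIndexExtremalStar p q G) :
    normalizer (P : Set G) ≤ centralizerModPCenter p w :=
  (h.normalizer_le_sup_centralizer hw.isSylowIn).trans <| sup_le hw.le fun _ hg =>
    mem_centralizerModPCenter_of_commute (mem_centralizer_iff_commute.1 hg w hw.mem)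

theorem normalizer_pCentralizer_le (hw : IsSecondCentral p P w) (h : IsPIndexExtremalStar p q G)
    (hq : q = p * Nat.card (pCenter p G)) :
    normalizer (pCentralizer p w : Set G) ≤ centralizerModPCenter p w := fun g hg => by
  have hconj : conj g • centralizerModPCenter p w ≤ centralizerModPCenter p w := by
    intro k hk
    rw [conj_smul_centralizerModPCenter] at hk
    have hle := h.pCentralizer_le_centralizerModPCenter hq (hw.isNoncentralPElement.conj g) hk
    rw [← conj_smul_pCentralizer, mem_normalizer_iff_conj_smul_eq.1 hg] at hle
    exact mem_centralizerModPCenter_comm.1 (hle (h.mem_pCentralizer_self hw.isNoncentralPElement))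
  obtain ⟨k, hk, hkg⟩ := hw.isSylowIn_centralizerModPCenter.exists_mul_mem_normalizer (g := g)
    ((pointwise_smul_le_pointwise_smul_iff.2 hw.le).trans hconj)
  exact (Subgroup.mul_mem_cancel_left _ hk).1 (hw.normalizer_le h hkg)

omit [Finite G] in
theorem conj_of_le (hw : IsSecondCentral p P w) (hg : g * w * g⁻¹ ∈ P)
    (hP : P ≤ centralizerModPCenter p (g * w * g⁻¹)) : IsSecondCentral p P (g * w * g⁻¹) where
  isSylowIn := hw.isSylowIn
  mem := hg
  notMem := conj_mem_pCenter_iff.not.2 hw.notMem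
  pow_prime_mem := by
    rw [conj_pow]
    exact conj_mem_pCenter_iff.2 hw.pow_prime_mem
  le := hP

theorem mem_pCentralizer_of_le (hw : IsSecondCentral p P w) (h : IsPIndexExtremalStar p q G)
    (hq : q = p * Nat.card (pCenter p G)) (hnc : ¬⁅P, P⁆ ≤ pCenter p G) (hv : v ∈ P)
    (hvP : P ≤ centralizerModPCenter p v) : v ∈ pCentralizer p w := by
  by_cases hvZ : v ∈ pCenter p G
  · exact h.pCenter_le_pCentralizer hw.isNoncentralPElement hvZ
  have hvp := isPElement_of_mem hw.isSylowIn.isPGroup hv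
  have hv' : IsSecondCentral p P v := ⟨hw.isSylowIn, hv, hvZ, h.pow_prime_mem_pCenter hq hvp, hvP⟩
  obtain ⟨s, hs, x, hx, hsx⟩ : ∃ s ∈ P, ∃ x ∈ P, ⁅s, x⁆ ∉ pCenter p G := by
    simpa [commutator_le] using hnc
  rw [← h.pCentralizer_eq_of_mem hq hw.isNoncentralPElement (hw.commutatorElement_mem h hs hx) hsx,
    h.pCentralizer_eq_of_mem hq hv'.isNoncentralPElement (hv'.commutatorElement_mem h hs hx) hsx]
  exact h.mem_pCentralizer_self hv'.isNoncentralPElement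

theorem exists_commutatorElement_mk_eq (hw : IsSecondCentral p P w)
    (h : IsPIndexExtremalStar p q G) (hq : q = p * Nat.card (pCenter p G))
    (hnc : ¬⁅P, P⁆ ≤ pCenter p G) (hv : v ∈ P) (hvW : v ∉ pCentralizer p w) :
    ∃ u ∈ P, ⁅(u : G ⧸ pCenter p G), (v : G ⧸ pCenter p G)⁆ = w := by
  obtain ⟨u, hu, huv⟩ := SetLike.not_le_iff_exists.1
    fun hle => hvW (hw.mem_pCentralizer_of_le h hq hnc hv hle)
  have hcW := hw.commutatorElement_mem h hu hv
  have hcZ := mem_centralizerModPCenter_iff.not.1 huv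
  have hc := isNoncentralPElement_of_mem (h.isPGroup_pCentralizer hw.isNoncentralPElement) hcW hcZ
  have hwc := h.mem_pCentralizer_self hw.isNoncentralPElement
  rw [← h.pCentralizer_eq_of_mem hq hw.isNoncentralPElement hcW hcZ,
    h.pCentralizer_eq_zpowers_sup hq hc,
    mem_zpowers_sup_iff (h.pow_prime_mem_pCenter hq hc.isPElement)] at hwc
  obtain ⟨n, -, z, hz, rfl⟩ := hwc
  have huc : u ∈ centralizerModPCenter p ⁅u, v⁆ := mem_centralizerModPCenter_comm.1
    (h.pCentralizer_le_centralizerModPCenter hq hw.isNoncentralPElement (hw.le hu) hcW)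
  refine ⟨u ^ n, pow_mem hu n, ?_⟩
  rw [QuotientGroup.mk_pow, commutatorElement_pow_left_of_commute
    (mem_centralizerModPCenter_iff_commute.1 huc), QuotientGroup.mk_mul,
    (QuotientGroup.eq_one_iff z).2 hz, mul_one]
  rfl

theorem eq_two_of_conj_mk_eq_inv (hw : IsSecondCentral p P w) (h : IsPIndexExtremalStar p q G)
    (hq : q = p * Nat.card (pCenter p G)) (hg : (g * w * g⁻¹ : G ⧸ pCenter p G) = (w : G ⧸ _)⁻¹) :
    p = 2 := by
  have hgw : w * (g * w * g⁻¹) ∈ pCenter p G := by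
    rw [← QuotientGroup.eq_one_iff]
    exact (congrArg _ hg).trans (mul_inv_cancel _)
  have hgN : g ∈ normalizer (pCentralizer p w : Set G) := by
    refine h.mem_normalizer_pCentralizer_of_conj_mem hq hw.isNoncentralPElement ?_
    exact (Subgroup.mul_mem_cancel_left _ (h.mem_pCentralizer_self hw.isNoncentralPElement)).1
      (h.pCenter_le_pCentralizer hw.isNoncentralPElement hgw)
  have hcomm := mem_centralizerModPCenter_iff_commute.1 (hw.normalizer_pCentralizer_le h hq hgN)
  have hsq : w ^ 2 ∈ pCenter p G := by
    rw [← QuotientGroup.eq_one_iff, QuotientGroup.mk_pow, sq, ← eq_inv_iff_mul_eq_one]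
    exact hcomm.mul_inv_cancel.symm.trans hg
  by_contra hp2
  exact hw.notMem (mem_of_pow_prime_mem_of_pow_mem hw.pow_prime_mem two_ne_zero
    (hp.out.two_le.lt_of_ne' hp2) hsq)

theorem mem_normalizer_pCentralizer_of_conj_mem (hw : IsSecondCentral p P w)
    (h : IsPIndexExtremalStar p q G) (hq : q = p * Nat.card (pCenter p G)) (hp2 : p ≠ 2)
    (hnc : ¬⁅P, P⁆ ≤ pCenter p G) (hg : g * w * g⁻¹ ∈ P) (hg' : g⁻¹ * w * g ∈ P) :
    g ∈ normalizer (pCentralizer p w : Set G) := by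
  by_contra hgN
  have conj_notMem {k : G} (hk : k ∉ normalizer (pCentralizer p w : Set G)) :
      k * w * k⁻¹ ∉ pCentralizer p w := fun hmem =>
    hk (h.mem_normalizer_pCentralizer_of_conj_mem hq hw.isNoncentralPElement hmem)
  obtain ⟨a, ha, haV⟩ := hw.exists_commutatorElement_mk_eq h hq hnc hg (conj_notMem hgN)
  obtain ⟨u, hu, huV⟩ := hw.exists_commutatorElement_mk_eq h hq hnc hg'
    (by simpa using conj_notMem (inv_mem_iff.not.2 hgN))
  have hwa := mem_centralizerModPCenter_iff_commute.1 (hw.le ha)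
  have hwu := mem_centralizerModPCenter_iff_commute.1 (hw.le hu)
  have hwV := mem_centralizerModPCenter_iff_commute.1 (hw.le hg)
  have hbV := congrArg (conj (g : G ⧸ pCenter p G)) huV
  rw [map_commutatorElement] at hbV
  obtain ⟨t, ht⟩ := exists_conj_eq_inv_of_commutatorElement_eq hwV.symm hwa haV
    ((Commute.conj_iff (g : G ⧸ pCenter p G)).2 hwu) (by simpa [mul_assoc] using hbV)
  obtain ⟨t, rfl⟩ := QuotientGroup.mk_surjective t
  exact hp2 (hw.eq_two_of_conj_mk_eq_inv h hq ht)

theorem ne_two_of_not_le (hw : IsSecondCentral p P w) (h : IsPIndexExtremalStar p q G)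
    (hq : q = p * Nat.card (pCenter p G)) (hv : v ∈ P) (hPv : ¬P ≤ centralizerModPCenter p v) :
    p ≠ 2 := by
  rintro rfl
  have mk_mul_self {x : G} (hx : x ∈ P) : (x * x : G ⧸ pCenter 2 G) = 1 := by
    rw [← sq, ← QuotientGroup.mk_pow, QuotientGroup.eq_one_iff]
    exact h.pow_prime_mem_pCenter hq (isPElement_of_mem hw.isSylowIn.isPGroup hx)
  exact hPv fun u hu => mem_centralizerModPCenter_iff_commute.2
    (commute_of_mul_self_eq_one (mk_mul_self hu) (mk_mul_self hv) (mk_mul_self (mul_mem hu hv)))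

theorem le_of_conj_mem (hw : IsSecondCentral p P w) (h : IsPIndexExtremalStar p q G)
    (hq : q = p * Nat.card (pCenter p G)) (hg : g * w * g⁻¹ ∈ P) :
    P ≤ centralizerModPCenter p (g * w * g⁻¹) := by
  by_contra hPv
  obtain ⟨s, hs, hsv⟩ := SetLike.not_le_iff_exists.1 hPv
  have hnc : ¬⁅P, P⁆ ≤ pCenter p G := fun hle =>
    hsv (mem_centralizerModPCenter_iff.2 (hle (commutator_mem_commutator hs hg)))
  have hT := hw.isSylowIn_centralizerModPCenter.conj_smul g
  rw [conj_smul_centralizerModPCenter] at hT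
  obtain ⟨m, hm, hle⟩ := hT.exists_le_conj (hw.isSylowIn.isPGroup.to_le inf_le_left)
    (inf_le_right : P ⊓ centralizerModPCenter p (g * w * g⁻¹) ≤ _)
  rw [← conj_smul_mul] at hle
  have hwv : w ∈ centralizerModPCenter p (g * w * g⁻¹) :=
    mem_centralizerModPCenter_comm.1 (hw.le hg)
  have hmw : m * g * w * (m * g)⁻¹ ∈ P := by
    have heq : m * g * w * (m * g)⁻¹ = ⁅m, g * w * g⁻¹⁆ * (g * w * g⁻¹) := by
      rw [← conj_eq_commutatorElement_mul, conj_apply]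
      group
    rw [heq]
    exact mul_mem (hw.pCenter_le (mem_centralizerModPCenter_iff.1 hm)) hg
  have hmg := hw.normalizer_pCentralizer_le h hq <|
    hw.mem_normalizer_pCentralizer_of_conj_mem h hq (hw.ne_two_of_not_le h hq hg hPv) hnc hmw
      (mem_conj_smul_iff.1 (hle ⟨hw.mem, hwv⟩))
  have heq : centralizerModPCenter p (g * w * g⁻¹) = centralizerModPCenter p w := by
    rw [← conj_smul_eq_self_of_mem hm, ← conj_smul_eq_self_of_mem hmg, conj_smul_mul,
      conj_smul_centralizerModPCenter g w]
  exact hPv (heq ▸ hw.le)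

theorem mem_centralizerModPCenter_of_conj_mem (hw : IsSecondCentral p P w)
    (h : IsPIndexExtremalStar p q G) (hq : q = p * Nat.card (pCenter p G))
    (hg : g * w * g⁻¹ ∈ P) : g ∈ centralizerModPCenter p w := by
  have hv := hw.conj_of_le hg (hw.le_of_conj_mem h hq hg)
  have hgP : conj g • P ≤ centralizerModPCenter p (g * w * g⁻¹) := by
    rw [← conj_smul_centralizerModPCenter]
    exact pointwise_smul_le_pointwise_smul_iff.2 hw.le
  obtain ⟨m, hm, hmg⟩ := hv.isSylowIn_centralizerModPCenter.exists_mul_mem_normalizer hgP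
  have hgv := (Subgroup.mul_mem_cancel_left _ hm).1 (hv.normalizer_le h hmg)
  rw [← conj_smul_centralizerModPCenter, mem_conj_smul_iff] at hgv
  simpa using hgv

theorem exists_mul_mem_centralizerModPCenter (hw : IsSecondCentral p P w)
    (h : IsPIndexExtremalStar p q G) (hq : q = p * Nat.card (pCenter p G)) (hx : x ∈ P)
    (hgx : g * x * g⁻¹ ∈ P) :
    ∃ m ∈ centralizerModPCenter p (g * x * g⁻¹), m * g ∈ centralizerModPCenter p w := by
  let M := centralizerModPCenter p (g * x * g⁻¹)
  have hwM : w ∈ M := mem_centralizerModPCenter_comm.1 (hw.le hgx)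
  have hgwM : g * w * g⁻¹ ∈ M := by
    rw [show M = _ from (conj_smul_centralizerModPCenter g x).symm, conj_mem_conj_smul_iff]
    exact mem_centralizerModPCenter_comm.1 (hw.le hx)
  have hwp := hw.isNoncentralPElement.isPElement
  obtain ⟨S, hS, hwS⟩ := hwp.exists_isSylowIn_mem hwM
  obtain ⟨m, hm, hgwS⟩ := hS.exists_mem_conj (hwp.conj g) hgwM
  obtain ⟨k, -, hSk⟩ := hw.isSylowIn.exists_le_conj hS.isPGroup le_top
  have hk : k⁻¹ ∈ centralizerModPCenter p w := hw.mem_centralizerModPCenter_of_conj_mem h hq <| by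
    simpa using mem_conj_smul_iff.1 (hSk hwS)
  have hkmg : k⁻¹ * (m⁻¹ * g) ∈ centralizerModPCenter p w :=
    hw.mem_centralizerModPCenter_of_conj_mem h hq <| by
      simpa [mul_assoc] using mem_conj_smul_iff.1 (hSk (mem_conj_smul_iff.1 hgwS))
  exact ⟨m⁻¹, inv_mem hm, (Subgroup.mul_mem_cancel_left _ hk).1 hkmg⟩

theorem commutatorElement_mem_pCentralizer (hw : IsSecondCentral p P w)
    (h : IsPIndexExtremalStar p q G) (hq : q = p * Nat.card (pCenter p G)) (hx : x ∈ P)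
    (hgx : ⁅g, x⁆ ∈ P) : ⁅g, x⁆ ∈ pCentralizer p w := by
  have hgxP : g * x * g⁻¹ ∈ P := by
    rw [← conj_apply, conj_eq_commutatorElement_mul]
    exact mul_mem hgx hx
  obtain ⟨m, hm, hmg⟩ := hw.exists_mul_mem_centralizerModPCenter h hq hx hgxP
  have hz := mem_centralizerModPCenter_iff.1 hm
  have heq : ⁅m * g, x⁆ = ⁅m, g * x * g⁻¹⁆ * ⁅g, x⁆ := by
    simp only [commutatorElement_def]
    group
  have hmem := hw.commutatorElement_mem_of_mem_centralizerModPCenter h hmg (hw.le hx)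
    (heq ▸ mul_mem (hw.pCenter_le hz) hgx)
  rw [heq] at hmem
  exact (Subgroup.mul_mem_cancel_left _
    (h.pCenter_le_pCentralizer hw.isNoncentralPElement hz)).1 hmem

end IsSecondCentral

end Fusion

section FocalSubgroup

variable {G : Type*} [Group G] [Finite G] {p q : ℕ} [hp : Fact p.Prime] {a b g w x : G}
  {N P : Subgroup G}

theorem IsSylowIn.inf_of_normal (hP : IsSylowIn p P ⊤) [hN : N.Normal] :
    IsSylowIn p (N ⊓ P) N := by
  obtain ⟨T, hT⟩ := exists_isSylowIn p N
  obtain ⟨k, -, hk⟩ := hP.exists_le_conj hT.isPGroup le_top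
  have hle : conj k⁻¹ • T ≤ N ⊓ P := by
    rw [map_inv, pointwise_smul_subset_iff, inv_inv]
    exact fun t ht => mem_conj_smul_iff.2
      ⟨by simpa using hN.conj_mem t (hT.le ht) k⁻¹, mem_conj_smul_iff.1 (hk ht)⟩
  refine isSylowIn_of_le_card (hP.isPGroup.to_le inf_le_right) inf_le_left ?_
  rw [← hT.card_eq, ← card_conj_smul k⁻¹ T]
  exact card_le_of_le hle

/- `N` is the kernel of the transfer of `G` into `P` modulo its focal subgroup. -/
theorem IsSylowIn.exists_normal_inf_le (hP : IsSylowIn p P ⊤) {W : Subgroup G}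
    (hW : ∀ g : G, ∀ x ∈ P, ⁅g, x⁆ ∈ P → ⁅g, x⁆ ∈ W) :
    ∃ N : Subgroup G, N.Normal ∧ N ⊓ P ≤ W ∧ ∀ y, IsPRegular p y → y ∈ N := by
  let S : Sylow p G := Sylow.ofCard P (by rw [hP.card_eq, card_top])
  refine ⟨S.transferFocal.ker, MonoidHom.normal_ker _, ?_, fun y hy =>
    hy.map_eq_one (S.2.to_quotient _) _⟩
  rw [show P = S from rfl, ker_transferFocal_inf_eq_focalSubgroup S, focalSubgroup_def,
    closure_le]
  rintro _ ⟨hxu, x, hx, u, rfl⟩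
  rw [SetLike.mem_coe, ← inv_mem_iff, commutatorElement_inv]
  exact hW u x hx (by rwa [← commutatorElement_inv, inv_mem_iff])

namespace IsSecondCentral

theorem commute_of_mem_pCentralizer (hw : IsSecondCentral p P w)
    (h : IsPIndexExtremalStar p q G) (hq : q = p * Nat.card (pCenter p G))
    (ha : a ∈ pCentralizer p w) (hb : b ∈ pCentralizer p w) : Commute a b := by
  have hle : pCentralizer p w ≤ centralizer {b} := by
    rw [h.pCentralizer_eq_zpowers_sup hq hw.isNoncentralPElement]
    refine sup_le (zpowers_le.2 (mem_centralizer_singleton_iff_commute.2 ?_))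
      (pCenter_le_centralizer _)
    exact ((h.mem_pCentralizer_iff hw.isNoncentralPElement).1 hb).2.symm
  exact mem_centralizer_singleton_iff_commute.1 (hle ha)

theorem commute_of_conj_mem_pCentralizer (hw : IsSecondCentral p P w)
    (h : IsPIndexExtremalStar p q G) (hq : q = p * Nat.card (pCenter p G))
    (hg : IsPRegular p g) (hx : x ∈ pCentralizer p w) (hgx : g * x * g⁻¹ ∈ pCentralizer p w) :
    Commute g x := by
  by_cases hxZ : x ∈ pCenter p G
  · exact hxZ.2 g
  have hgW : g ∈ normalizer (pCentralizer p w : Set G) := by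
    rw [mem_normalizer_iff_conj_smul_eq,
      ← h.pCentralizer_eq_of_mem hq hw.isNoncentralPElement hx hxZ, conj_smul_pCentralizer,
      h.pCentralizer_eq_of_mem hq hw.isNoncentralPElement hx hxZ]
    exact h.pCentralizer_eq_of_mem hq hw.isNoncentralPElement hgx (conj_mem_pCenter_iff.not.2 hxZ)
  have hgw := hg.commute_of_mem_centralizerModPCenter (hw.normalizer_pCentralizer_le h hq hgW)
  exact mem_centralizer_iff_commute.1
    (h.mem_centralizer_pCentralizer hw.isNoncentralPElement hg hgw) x hx

theorem isPRegular_mul (hw : IsSecondCentral p P w) (h : IsPIndexExtremalStar p q G)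
    (hq : q = p * Nat.card (pCenter p G)) (ha : IsPRegular p a) (hb : IsPRegular p b) :
    IsPRegular p (a * b) := by
  obtain ⟨N, hN, hNP, hreg⟩ := hw.isSylowIn.exists_normal_inf_le fun _ _ hx hgx =>
    hw.commutatorElement_mem_pCentralizer h hq hx hgx
  have hT : IsSylowIn p (N ⊓ P) N := hw.isSylowIn.inf_of_normal
  refine hT.isPRegular_mul_of_normalizer_le_centralizer (fun g hg => ?_) ha hb (hreg a ha)
    (hreg b hb)
  refine mem_centralizer_iff_commute.2 fun f hf => ?_
  obtain ⟨x, y, hx, hy, hxy, rfl⟩ := exists_isPElement_mul_isPRegular_eq p g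
  have hxg : x ∈ N ⊓ normalizer ((N ⊓ P : Subgroup G) : Set G) :=
    zpowers_le.2 hg (hx.mem_zpowers_mul hy hxy)
  have hyf := conj_mem_of_mem_normalizer ((Subgroup.mul_mem_cancel_left _ hxg).1 hg).2 hf
  have hxT := (hT.of_le (le_inf hT.le le_normalizer) inf_le_left).mem_of_le_normalizer
    inf_le_right hx hxg
  exact (hw.commute_of_mem_pCentralizer h hq (hNP hxT) (hNP hf)).mul_left
    (hw.commute_of_conj_mem_pCentralizer h hq hy (hNP hf) (hNP hyf))

end IsSecondCentral

theorem IsPIndexExtremalStar.isPRegular_mul (h : IsPIndexExtremalStar p q G)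
    (ha : IsPRegular p a) (hb : IsPRegular p b) : IsPRegular p (a * b) := by
  obtain ⟨P, hP⟩ := exists_isSylowIn p (⊤ : Subgroup G)
  obtain hmul | ⟨A₁, A₂, hA₁, hP₁, hA₂, hP₂, hne⟩ := h.isPRegular_mul_or_exists_ne hP
  · exact hmul a b ha hb
  · obtain ⟨w, hw⟩ := h.exists_isSecondCentral hP
    exact hw.isPRegular_mul h (h.eq_prime_mul_card_pCenter hw hA₁ hP₁ hA₂ hP₂ hne) ha hb

omit hp in
theorem IsPIndexExtremal.isPIndexExtremalStar (h : IsPIndexExtremal p G) (hp : p.Prime)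
    (hx : IsPElement p x) (hx1 : pIndex p x ≠ 1) :
    IsPIndexExtremalStar p (centralizerPPart p x) G where
  eq_or_eq g := by
    rw [← centralizerPPart_mul_pIndex p g]
    by_cases hg1 : pIndex p g = 1
    · exact .inl (by rw [hg1, mul_one])
    · have hgx : pIndex p g = pIndex p x := h.unique ⟨hg1, g, rfl⟩ ⟨hx1, x, rfl⟩
      have hpos : 0 < pIndex p x := pow_pos hp.pos _
      refine .inr (Nat.eq_of_mul_eq_mul_right hpos ?_)
      rw [centralizerPPart_mul_pIndex, ← hgx, centralizerPPart_mul_pIndex]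
  lt := by
    rw [← centralizerPPart_mul_pIndex p x]
    exact lt_mul_of_one_lt_right (pow_pos hp.pos _)
      (hx1.symm.lt_of_le (pow_pos hp.pos _ : 0 < pIndex p x))
  exists_eq := ⟨x, hx, rfl⟩

end FocalSubgroup

theorem rp_star_normal_p_complement {G : Type*} [Group G] [Finite G] (p : ℕ)
    (hp : p.Prime) (hR : IsPIndexExtremal p G)
    (hstar : ∃ x : G, IsPElement p x ∧ pIndex p x ≠ 1) :
    ∃ N : Subgroup G, N.Normal ∧ ¬ p ∣ Nat.card N ∧ ∃ k : ℕ, N.index = p ^ k := by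
  have : Fact p.Prime := ⟨hp⟩
  obtain ⟨x, hx, hx1⟩ := hstar
  have h := hR.isPIndexExtremalStar hp hx hx1
  exact exists_normal_pComplement_of_isPRegular_mul fun a b => h.isPRegular_mul
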